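/- arXiv:1611.07453 — 3 statements merged into one kernel-verified Lean document; each statement's English description precedes it below -/
import Mathlib

section
/- Let G be a finitely generated group and H a normal subgroup of G with canonical projection p : G → G/H. Suppose there is a finite collection 𝒜 of finitely generated subgroups of G such that (1) the union of all subgroups in 𝒜 generates G and A ∩ H is finitely generated for each A ∈ 𝒜, and (2) for each pair A, A' ∈ 𝒜 there is a sequence A = A_1, A_2, ..., A_n = A' of subgroups in 𝒜 with p(A_i ∩ A_{i+1}) a finite-index subgroup of G/H for each i ∈ {1, ..., n−1}. Then H is finitely generated and the distortion Dist_G^H is dominated by the function f(n) = n · max{ Dist_A^{A∩H}(n) : A ∈ 𝒜 }. -/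
/-- The word length of `g` with respect to a set `S` of letters. -/
noncomputable def wordLength {G : Type*} [Group G] (S : Set G) (g : G) : ℕ :=
  sInf {n | ∃ l : List G, l.length = n ∧ (∀ x ∈ l, x ∈ S ∨ x⁻¹ ∈ S) ∧ l.prod = g}

/-- The distortion function: `Dist(r) = max { |h|_T : h ∈ H, |h|_S ≤ r }`. -/
noncomputable def distortion {G : Type*} [Group G] (S T : Set G) (H : Subgroup G)
    (r : ℕ) : ℕ :=
  sSup {n | ∃ h ∈ H, wordLength S h ≤ r ∧ wordLength T h = n}

/-- `f ⪯ g`: there are positive constants `A, B, C, D` such that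
`f x ≤ A * g (B * x) + C * x` for all `x > D`. -/
def Dominated (f g : ℕ → ℕ) : Prop :=
  ∃ A B C D : ℕ, 0 < A ∧ 0 < B ∧ 0 < C ∧ ∀ x : ℕ, D < x → f x ≤ A * g (B * x) + C * x

section helpers
open scoped Pointwise

def bl {G : Type*} [Group G] (S : Set G) (n : ℕ) : Set G := (insert 1 (S ∪ S⁻¹)) ^ n

variable {G : Type*} [Group G]

theorem bl_mono {S T : Set G} {m n : ℕ} (h : S ⊆ T) (hmn : m ≤ n) : bl S m ⊆ bl T n := by
  unfold bl
  have h1 : insert 1 (S ∪ S⁻¹) ⊆ insert 1 (T ∪ T⁻¹) :=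
    Set.insert_subset_insert (Set.union_subset_union h (Set.inv_subset_inv.2 h))
  exact (Set.pow_subset_pow_left h1).trans
    (Set.pow_subset_pow_right (Set.mem_insert _ _) hmn)

theorem bl_one_mem (S : Set G) (n : ℕ) : (1 : G) ∈ bl S n :=
  Set.one_mem_pow (Set.mem_insert _ _)

theorem bl_mul {S : Set G} {m n : ℕ} {x y : G} (hx : x ∈ bl S m) (hy : y ∈ bl S n) :
    x * y ∈ bl S (m + n) := by
  unfold bl at *
  rw [pow_add]; exact Set.mul_mem_mul hx hy

theorem bl_inv {S : Set G} {n : ℕ} {x : G} (hx : x ∈ bl S n) : x⁻¹ ∈ bl S n := by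
  unfold bl at *
  have : (insert 1 (S ∪ S⁻¹))⁻¹ = insert 1 (S ∪ S⁻¹) := by
    ext y; simp [or_comm]
  rw [← Set.mem_inv, ← inv_pow, this]; exact hx

theorem bl_gen {S : Set G} {x : G} (hx : x ∈ S) : x ∈ bl S 1 := by
  unfold bl; rw [pow_one]; right; left; exact hx

theorem bl_finite {S : Set G} (hS : S.Finite) (n : ℕ) : (bl S n).Finite := by
  unfold bl
  induction n with
  | zero => simp
  | succ n ih => rw [pow_succ]; exact ih.mul ((hS.union hS.inv).insert 1)

theorem bl_sub {S : Set G} {K : Subgroup G} (h : S ⊆ K) (n : ℕ) : bl S n ⊆ K := by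
  unfold bl
  intro x hx
  have h1 : insert 1 (S ∪ S⁻¹) ⊆ (K : Set G) := by
    intro y hy
    rcases hy with rfl | hy | hy
    · exact K.one_mem
    · exact h hy
    · have := K.inv_mem (h hy)
      simpa using this
  induction n generalizing x with
  | zero => simp at hx; subst hx; exact K.one_mem
  | succ n ih =>
    rw [pow_succ] at hx
    obtain ⟨a, ha, b, hb, rfl⟩ := hx
    exact K.mul_mem (ih ha) (h1 hb)

theorem bl_map {G' : Type*} [Group G'] (f : G →* G') (S : Set G) (n : ℕ) :
    f '' (bl S n) = bl (f '' S) n := by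
  unfold bl
  rw [Set.image_pow, Set.image_insert_eq, Set.image_union, map_one]
  congr 3
  ext y; constructor
  · rintro ⟨x, hx, rfl⟩; exact ⟨x⁻¹, hx, by simp⟩
  · rintro ⟨x, hx, hxy⟩; exact ⟨x⁻¹, by simpa using hx, by simp [hxy]⟩

theorem bl_conj {S : Set G} {n : ℕ} {x : G} (w : G) (hx : x ∈ bl S n) :
    w * x * w⁻¹ ∈ bl ((fun y => w * y * w⁻¹) '' S) n := by
  have h := bl_map (MulAut.conj w).toMonoidHom S n
  have : (MulAut.conj w).toMonoidHom x ∈ (MulAut.conj w).toMonoidHom '' bl S n := ⟨x, hx, rfl⟩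
  rw [h] at this
  exact this

theorem bl_bl {S T : Set G} {c : ℕ} (h : S ⊆ bl T c) (n : ℕ) : bl S n ⊆ bl T (c * n) := by
  have h1 : insert 1 (S ∪ S⁻¹) ⊆ bl T c := by
    rintro y (rfl | hy | hy)
    · exact bl_one_mem _ _
    · exact h hy
    · have := bl_inv (h hy)
      simpa using this
  have := Set.pow_subset_pow_left h1 (n := n)
  refine (this : bl S n ⊆ _).trans ?_
  unfold bl; rw [pow_mul]

theorem bl_exists {S : Set G} {x : G} (hx : x ∈ Subgroup.closure S) : ∃ n, x ∈ bl S n := by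
  induction hx using Subgroup.closure_induction with
  | mem x hx => exact ⟨1, bl_gen hx⟩
  | one => exact ⟨0, bl_one_mem _ _⟩
  | mul x y _ _ hx hy =>
    obtain ⟨a, ha⟩ := hx
    obtain ⟨b, hb⟩ := hy
    exact ⟨_, bl_mul ha hb⟩
  | inv x _ hx =>
    obtain ⟨a, ha⟩ := hx
    exact ⟨a, bl_inv ha⟩

theorem bl_exists_set {S F : Set G} (hF : F.Finite) (h : F ⊆ Subgroup.closure S) :
    ∃ n, F ⊆ bl S n := by
  induction F, hF using Set.Finite.induction_on with
  | empty => exact ⟨0, by simp⟩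
  | @insert a s _ _ ih =>
    obtain ⟨n, hn⟩ := ih ((Set.subset_insert _ _).trans h)
    obtain ⟨m, hm⟩ := bl_exists (h (Set.mem_insert _ _))
    refine ⟨m + n, ?_⟩
    rintro x (rfl | hx)
    · exact bl_mono subset_rfl (by omega) hm
    · exact bl_mono subset_rfl (by omega) (hn hx)

theorem mem_bl_list {S : Set G} (l : List G) (h : ∀ x ∈ l, x ∈ S ∨ x⁻¹ ∈ S) :
    l.prod ∈ bl S l.length := by
  induction l with
  | nil => simpa using bl_one_mem S 0
  | cons a l ih =>
    rw [List.prod_cons, List.length_cons, add_comm]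
    refine bl_mul ?_ (ih fun x hx => h x (List.mem_cons_of_mem _ hx))
    rcases h a List.mem_cons_self with h | h
    · exact bl_gen h
    · simpa using bl_inv (bl_gen h)

theorem bl_list {S : Set G} {n : ℕ} {x : G} (hx : x ∈ bl S n) :
    ∃ l : List G, l.length ≤ n ∧ (∀ x ∈ l, x ∈ S ∨ x⁻¹ ∈ S) ∧ l.prod = x := by
  unfold bl at hx
  induction n generalizing x with
  | zero => simp at hx; exact ⟨[], by simp [hx]⟩
  | succ n ih =>
    rw [pow_succ'] at hx
    obtain ⟨a, ha, b, hb, rfl⟩ := hx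
    obtain ⟨l, hl, hl2, hl3⟩ := ih hb
    rcases ha with rfl | ha
    · exact ⟨l, by omega, hl2, by simp [hl3]⟩
    · refine ⟨a :: l, by simpa using hl, ?_, by simp [hl3]⟩
      intro y hy
      rcases List.mem_cons.1 hy with rfl | hy
      · simpa using ha
      · exact hl2 y hy

theorem wl_le {S : Set G} {n : ℕ} {x : G} (hx : x ∈ bl S n) : wordLength S x ≤ n := by
  obtain ⟨l, hl, hl2, hl3⟩ := bl_list hx
  have h : wordLength S x ≤ l.length := Nat.sInf_le ⟨l, rfl, hl2, hl3⟩
  exact h.trans hl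

theorem mem_bl_wl {S : Set G} {x : G} (hx : x ∈ Subgroup.closure S) :
    x ∈ bl S (wordLength S x) := by
  obtain ⟨n, hn⟩ := bl_exists hx
  obtain ⟨l, hl, hl2, hl3⟩ := bl_list hn
  have : wordLength S x ∈ _ := Nat.sInf_mem (s := {n | ∃ l : List G, l.length = n ∧
    (∀ x ∈ l, x ∈ S ∨ x⁻¹ ∈ S) ∧ l.prod = x}) ⟨_, l, rfl, hl2, hl3⟩
  obtain ⟨l', h1, h2, h3⟩ := this
  rw [← h1, ← h3]
  exact mem_bl_list l' h2

theorem dist_bdd {S : Set G} (T : Set G) {H : Subgroup G} (hS : S.Finite)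
    (hH : H ≤ Subgroup.closure S) (r : ℕ) :
    BddAbove {n | ∃ h ∈ H, wordLength S h ≤ r ∧ wordLength T h = n} := by
  refine (((bl_finite hS r).image (wordLength T)).subset ?_).bddAbove
  rintro n ⟨h, hh, h1, rfl⟩
  exact ⟨h, bl_mono subset_rfl h1 (mem_bl_wl (hH hh)), rfl⟩

theorem dist_mono {S : Set G} (T : Set G) {H : Subgroup G} (hS : S.Finite)
    (hH : H ≤ Subgroup.closure S) : Monotone (distortion S T H) := by
  intro a b hab
  refine csSup_le' ?_
  rintro n ⟨h, hh, h1, rfl⟩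
  exact le_csSup (dist_bdd T hS hH b) ⟨h, hh, h1.trans hab, rfl⟩

theorem mem_bl_dist {S T : Set G} {H : Subgroup G} (hS : S.Finite)
    (hH : H ≤ Subgroup.closure S) (hT : H ≤ Subgroup.closure T) {r : ℕ} {h : G} (hh : h ∈ H)
    (hb : h ∈ bl S r) : h ∈ bl T (distortion S T H r) :=
  bl_mono subset_rfl (le_csSup (dist_bdd T hS hH r) ⟨h, hh, wl_le hb, rfl⟩) (mem_bl_wl (hT hh))

/-- Schreier type lemma. -/
theorem schreier (P : Subgroup G) [P.Normal] (hP : P.index ≠ 0) (A : Subgroup G) (S : Set G)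
    (hS : S.Finite) (hSA : S ⊆ A) :
    ∃ U : Set G, U.Finite ∧ U ⊆ A ∧ U ⊆ P ∧ ∀ n, ∀ g ∈ bl S n, g ∈ P → g ∈ bl U n := by
  classical
  have hfi : P.FiniteIndex := ⟨hP⟩
  have : Finite (G ⧸ P) := Subgroup.finite_quotient_of_finiteIndex
  have hτ : ∃ τ : G ⧸ P → G, τ 1 = 1 ∧ ∀ g ∈ A, τ (g : G ⧸ P) ∈ A ∧ ((τ (g : G ⧸ P) : G) : G ⧸ P) = g := by
    have : ∀ q : G ⧸ P, ∃ t : G, (q = 1 → t = 1) ∧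
        ((∃ g ∈ A, (g : G ⧸ P) = q) → t ∈ A ∧ (t : G ⧸ P) = q) := by
      intro q
      by_cases h1 : q = 1
      · subst h1; exact ⟨1, fun _ => rfl, fun _ => ⟨A.one_mem, rfl⟩⟩
      · by_cases h : ∃ g ∈ A, (g : G ⧸ P) = q
        · obtain ⟨g, hg, hq⟩ := h
          exact ⟨g, fun h => absurd h h1, fun _ => ⟨hg, hq⟩⟩
        · exact ⟨1, fun _ => rfl, fun h' => absurd h' h⟩
    choose τ h1 h2 using this
    exact ⟨τ, h1 1 rfl, fun g hg => h2 _ ⟨g, hg, rfl⟩⟩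
  obtain ⟨τ, hτ1, hτ⟩ := hτ
  set S' : Set G := insert 1 (S ∪ S⁻¹) with hS'
  have hS'A : ∀ s ∈ S', s ∈ A := by
    rintro s (rfl | hs | hs)
    · exact A.one_mem
    · exact hSA hs
    · simpa using A.inv_mem (hSA hs)
  have hS'f : S'.Finite := (hS.union hS.inv).insert 1
  refine ⟨(Set.image2 (fun (q : G ⧸ P) (s : G) => τ q * s * (τ (q * (s : G ⧸ P)))⁻¹)
    Set.univ S') ∩ ((A : Set G) ∩ P), (Set.Finite.image2 _ Set.finite_univ hS'f).inter_of_left _,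
    fun x hx => hx.2.1, fun x hx => hx.2.2, ?_⟩
  set U := (Set.image2 (fun (q : G ⧸ P) (s : G) => τ q * s * (τ (q * (s : G ⧸ P)))⁻¹)
    Set.univ S') ∩ ((A : Set G) ∩ P) with hU
  have key : ∀ n, ∀ g ∈ bl S n, g * (τ (g : G ⧸ P))⁻¹ ∈ bl U n := by
    intro n
    induction n with
    | zero =>
      intro g hg
      have : g = 1 := by simpa [bl] using hg
      subst this
      have : ((1 : G) : G ⧸ P) = 1 := rfl
      rw [this, hτ1]; simpa using bl_one_mem U 0
    | succ n ih =>
      intro g hg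
      have hg' : g ∈ bl S n * S' := by unfold bl at *; rw [← pow_succ]; exact hg
      obtain ⟨a, ha, s, hs, rfl⟩ := hg'
      have haA : a ∈ A := bl_sub hSA n ha
      have hsA := hS'A s hs
      have e : a * s * (τ ((a * s : G) : G ⧸ P))⁻¹ = (a * (τ (a : G ⧸ P))⁻¹) *
        (τ (a : G ⧸ P) * s * (τ ((a : G ⧸ P) * (s : G ⧸ P)))⁻¹) := by
        rw [QuotientGroup.mk_mul]; group
      show a * s * (τ ((a * s : G) : G ⧸ P))⁻¹ ∈ _
      rw [e]
      refine bl_mul (ih a ha) (bl_gen ⟨⟨_, trivial, s, hs, rfl⟩, ?_, ?_⟩)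
      · rw [← QuotientGroup.mk_mul]
        exact A.mul_mem (A.mul_mem (hτ a haA).1 hsA) (A.inv_mem (hτ _ (A.mul_mem haA hsA)).1)
      · show _ ∈ P
        rw [← QuotientGroup.eq_one_iff]
        rw [← QuotientGroup.mk_mul, QuotientGroup.mk_mul, QuotientGroup.mk_mul,
          QuotientGroup.mk_inv, (hτ a haA).2, (hτ _ (A.mul_mem haA hsA)).2]
        simp
  intro n g hg hgP
  have := key n g hg
  rw [(QuotientGroup.eq_one_iff g).2 hgP, hτ1] at this
  simpa using this

def Good (P H : Subgroup G) (SA : Subgroup G → Set G) (δ : ℕ → ℕ) (A A' : Subgroup G)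
    (w : G) : Prop :=
  ∃ T0 : Set G, T0.Finite ∧ T0 ⊆ H ∧ ∃ C : ℕ, ∀ r m, m ∈ A → m ∈ P → m ∈ bl (SA A) r →
    ∃ m' k, m' ∈ A' ∧ m' ∈ P ∧ m' ∈ bl (SA A') (C * (r + 1)) ∧
      k ∈ bl T0 (C * (δ (C * (r + 1)) + 1)) ∧ m * w = k * w * m'

theorem Good.comp {P H : Subgroup G} [H.Normal] {SA : Subgroup G → Set G} {δ : ℕ → ℕ}
    (hδ : Monotone δ) {A A' A'' : Subgroup G} {w w' : G}
    (h1 : Good P H SA δ A A' w) (h2 : Good P H SA δ A' A'' w') :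
    Good P H SA δ A A'' (w * w') := by
  obtain ⟨T1, hT1, hT1H, C1, h1⟩ := h1
  obtain ⟨T2, hT2, hT2H, C2, h2⟩ := h2
  refine ⟨T1 ∪ (fun y => w * y * w⁻¹) '' T2, hT1.union (hT2.image _), ?_,
    C1 + C2 * (C1 + 1), ?_⟩
  · rintro x (hx | ⟨y, hy, rfl⟩)
    · exact hT1H hx
    · exact Subgroup.Normal.conj_mem inferInstance y (hT2H hy) w
  · intro r m hmA hmP hm
    obtain ⟨m1, k1, a1, b1, c1, d1, e1⟩ := h1 r m hmA hmP hm
    obtain ⟨m2, k2, a2, b2, c2, d2, e2⟩ := h2 _ m1 a1 b1 c1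
    have i1 : C2 * (C1 * (r + 1) + 1) ≤ (C1 + C2 * (C1 + 1)) * (r + 1) := by
      have : C1 * (r + 1) + 1 ≤ (C1 + 1) * (r + 1) := by nlinarith
      calc _ ≤ C2 * ((C1 + 1) * (r + 1)) := Nat.mul_le_mul_left _ this
        _ ≤ _ := by nlinarith [Nat.zero_le (C1 * (r + 1))]
    have i2 : C1 * (r + 1) ≤ (C1 + C2 * (C1 + 1)) * (r + 1) :=
      Nat.mul_le_mul_right _ (by omega)
    refine ⟨m2, k1 * (w * k2 * w⁻¹), a2, b2, bl_mono subset_rfl i1 c2, ?_, ?_⟩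
    · have := bl_mul (bl_mono (Set.subset_union_left (t := (fun y => w * y * w⁻¹) '' T2)) le_rfl d1)
        (bl_mono (Set.subset_union_right (s := T1)) le_rfl (bl_conj w d2))
      refine bl_mono subset_rfl ?_ this
      have j1 := hδ i1
      have j2 := hδ i2
      set D := δ ((C1 + C2 * (C1 + 1)) * (r + 1))
      calc _ ≤ C1 * (D + 1) + C2 * (D + 1) := by gcongr
        _ = (C1 + C2) * (D + 1) := by ring
        _ ≤ _ := by
          refine Nat.mul_le_mul_right _ ?_
          nlinarith [Nat.zero_le (C2 * C1)]
    · calc m * (w * w') = (m * w) * w' := by group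
        _ = k1 * w * (m1 * w') := by rw [e1]; group
        _ = _ := by rw [e2]; group

theorem good_self {P H : Subgroup G} [P.Normal] {SA : Subgroup G → Set G} {δ : ℕ → ℕ}
    {A : Subgroup G} (hA : Subgroup.closure (SA A) = A) {b : G} (hb : b ∈ A) :
    Good P H SA δ A A b := by
  obtain ⟨c, hc⟩ := bl_exists (S := SA A) (x := b) (by rw [hA]; exact hb)
  refine ⟨∅, Set.finite_empty, by simp, 2 * c + 1, ?_⟩
  intro r m hmA hmP hm
  refine ⟨b⁻¹ * m * b, 1, A.mul_mem (A.mul_mem (A.inv_mem hb) hmA) hb, ?_, ?_, bl_one_mem _ _,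
    by group⟩
  · have := Subgroup.Normal.conj_mem (inferInstance : P.Normal) m hmP b⁻¹
    simpa using this
  · exact bl_mono subset_rfl (by nlinarith) (bl_mul (bl_mul (bl_inv hc) hm) hc)

theorem good_edge {P H : Subgroup G} [P.Normal] [H.Normal] (hHP : H ≤ P) (hP : P.index ≠ 0)
    {SA TA : Subgroup G → Set G} {δ : ℕ → ℕ} (hδ : Monotone δ)
    {A A' : Subgroup G} (hSf : (SA A).Finite) (hA : Subgroup.closure (SA A) = A)
    (hA' : Subgroup.closure (SA A') = A') (hTf : (TA A).Finite) (hTH : TA A ⊆ H)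
    (hd : ∀ r, ∀ k ∈ A, k ∈ H → k ∈ bl (SA A) r → k ∈ bl (TA A) (δ r))
    (hedge : P ≤ (A ⊓ A') ⊔ H) : Good P H SA δ A A' 1 := by
  have hSA : SA A ⊆ A := by conv_rhs => rw [← hA]
                            exact Subgroup.subset_closure
  obtain ⟨U, hUf, hUA, hUP, hU⟩ := schreier P hP A (SA A) hSf hSA
  have hf : ∀ u : G, ∃ v : G, u ∈ U → v ∈ A ⊓ A' ∧ (v : G ⧸ H) = u := by
    intro u
    by_cases hu : u ∈ U
    · have := hedge (hUP hu)
      rw [Subgroup.mem_sup_of_normal_right] at this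
      obtain ⟨v, hv, h, hh, e⟩ := this
      refine ⟨v, fun _ => ⟨hv, ?_⟩⟩
      rw [← e, QuotientGroup.mk_mul, (QuotientGroup.eq_one_iff h).2 hh, mul_one]
    · exact ⟨1, fun h => absurd h hu⟩
  choose f hf using hf
  obtain ⟨c1, hc1⟩ := bl_exists_set (S := SA A) (hUf.image f) (by
    rintro _ ⟨u, hu, rfl⟩; rw [hA]; exact (hf u hu).1.1)
  obtain ⟨c2, hc2⟩ := bl_exists_set (S := SA A') (hUf.image f) (by
    rintro _ ⟨u, hu, rfl⟩; rw [hA']; exact (hf u hu).1.2)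
  refine ⟨TA A, hTf, hTH, c1 + c2 + 1, ?_⟩
  intro r m hmA hmP hm
  have hmU := hU r m hm hmP
  have e1 : QuotientGroup.mk' H '' U = QuotientGroup.mk' H '' (f '' U) := by
    rw [Set.image_image]
    exact Set.image_congr fun u hu => (hf u hu).2.symm
  have : QuotientGroup.mk' H m ∈ QuotientGroup.mk' H '' (bl U r) := ⟨m, hmU, rfl⟩
  rw [bl_map, e1, ← bl_map] at this
  obtain ⟨m', hm', e⟩ := this
  have hm'AA : m' ∈ A ⊓ A' := bl_sub (K := A ⊓ A')
    (by rintro _ ⟨u, hu, rfl⟩; exact (hf u hu).1) r hm'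
  have hk : m * m'⁻¹ ∈ H := by
    rw [← QuotientGroup.eq_one_iff, QuotientGroup.mk_mul, QuotientGroup.mk_inv]
    have e' : (m' : G ⧸ H) = m := e
    rw [e']; simp
  have hm'P : m' ∈ P := by
    have := P.mul_mem (P.inv_mem (hHP hk)) hmP
    simpa using this
  refine ⟨m', m * m'⁻¹, hm'AA.2, hm'P, bl_mono subset_rfl (by nlinarith) (bl_bl hc2 r hm'), ?_,
    by group⟩
  have hkb := bl_mul hm (bl_inv (bl_bl hc1 r hm'))
  have := hd _ _ (A.mul_mem hmA (A.inv_mem hm'AA.1)) hk hkb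
  refine bl_mono subset_rfl ?_ this
  have h3 : δ (r + c1 * r) ≤ δ ((c1 + c2 + 1) * (r + 1)) := hδ (by nlinarith)
  nlinarith [Nat.zero_le ((c1 + c2) * δ ((c1 + c2 + 1) * (r + 1)))]

theorem conj_cheap {P H : Subgroup G} [H.Normal]
    {SA TA : Subgroup G → Set G} {δ : ℕ → ℕ} (hδ : Monotone δ)
    {A : Subgroup G} (hTf : (TA A).Finite) (hTH : TA A ⊆ H)
    (hd : ∀ r, ∀ k ∈ A, k ∈ H → k ∈ bl (SA A) r → k ∈ bl (TA A) (δ r))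
    {h : G} (hh : h ∈ H) (hg : Good P H SA δ A A h) :
    ∃ T0 : Set G, T0.Finite ∧ T0 ⊆ H ∧ ∃ C : ℕ, ∀ r m, m ∈ A → m ∈ P → m ∈ bl (SA A) r →
      m * h * m⁻¹ ∈ bl T0 (C * (δ (C * (r + 1)) + 1)) := by
  obtain ⟨T0, hT0, hT0H, C, hC⟩ := hg
  refine ⟨T0 ∪ TA A ∪ {h}, (hT0.union hTf).union (Set.finite_singleton h), ?_, C + 2, ?_⟩
  · rintro x ((hx | hx) | rfl)
    · exact hT0H hx
    · exact hTH hx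
    · exact hh
  intro r m hmA hmP hm
  obtain ⟨m', k, a, b, c, d, e⟩ := hC r m hmA hmP hm
  have hkH : k ∈ H := bl_sub hT0H _ d
  have hmm : m' * m⁻¹ ∈ H := by
    have e2 : m' * m⁻¹ = h⁻¹ * k⁻¹ * (m * h * m⁻¹) := by rw [e]; group
    rw [e2]
    exact H.mul_mem (H.mul_mem (H.inv_mem hh) (H.inv_mem hkH))
      (Subgroup.Normal.conj_mem inferInstance h hh m)
  have h1 := hd _ _ (A.mul_mem a (A.inv_mem hmA)) hmm (bl_mul c (bl_inv hm))
  have e3 : m * h * m⁻¹ = k * h * (m' * m⁻¹) := by rw [e]; group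
  rw [e3]
  have s1 : T0 ⊆ T0 ∪ TA A ∪ {h} := fun x hx => Or.inl (Or.inl hx)
  have s2 : TA A ⊆ T0 ∪ TA A ∪ {h} := fun x hx => Or.inl (Or.inr hx)
  have s3 : h ∈ T0 ∪ TA A ∪ {h} := Or.inr rfl
  refine bl_mono subset_rfl ?_ (bl_mul (bl_mul (bl_mono s1 le_rfl d) (bl_gen s3))
    (bl_mono s2 le_rfl h1))
  have j1 : δ (C * (r + 1)) ≤ δ ((C + 2) * (r + 1)) := hδ (by nlinarith)
  have j2 : δ (C * (r + 1) + r) ≤ δ ((C + 2) * (r + 1)) := hδ (by nlinarith)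
  set D := δ ((C + 2) * (r + 1))
  have j3 : C * (δ (C * (r + 1)) + 1) ≤ C * (D + 1) := by gcongr
  nlinarith

theorem conj_cheap_set {P H A : Subgroup G} {SA : Subgroup G → Set G} {δ : ℕ → ℕ}
    (hδ : Monotone δ)
    (hc : ∀ h ∈ H, ∃ T0 : Set G, T0.Finite ∧ T0 ⊆ H ∧ ∃ C : ℕ, ∀ r m, m ∈ A → m ∈ P →
      m ∈ bl (SA A) r → m * h * m⁻¹ ∈ bl T0 (C * (δ (C * (r + 1)) + 1)))
    {F : Set G} (hF : F.Finite) (hFH : F ⊆ H) :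
    ∃ T0 : Set G, T0.Finite ∧ T0 ⊆ H ∧ ∃ C : ℕ, ∀ h ∈ F, ∀ r m, m ∈ A → m ∈ P →
      m ∈ bl (SA A) r → m * h * m⁻¹ ∈ bl T0 (C * (δ (C * (r + 1)) + 1)) := by
  induction F, hF using Set.Finite.induction_on with
  | empty => exact ⟨∅, by simp, by simp, 0, by simp⟩
  | @insert a s _ _ ih =>
    obtain ⟨T1, h1, h1H, C1, h1C⟩ := ih ((Set.subset_insert _ _).trans hFH)
    obtain ⟨T2, h2, h2H, C2, h2C⟩ := hc a (hFH (Set.mem_insert _ _))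
    refine ⟨T1 ∪ T2, h1.union h2, Set.union_subset h1H h2H, C1 + C2, ?_⟩
    intro h hh r m hmA hmP hm
    have i1 : δ (C1 * (r + 1)) ≤ δ ((C1 + C2) * (r + 1)) := hδ (by gcongr; omega)
    have i2 : δ (C2 * (r + 1)) ≤ δ ((C1 + C2) * (r + 1)) := hδ (by gcongr; omega)
    rcases hh with rfl | hh
    · refine bl_mono Set.subset_union_right ?_ (h2C r m hmA hmP hm)
      gcongr; omega
    · refine bl_mono Set.subset_union_left ?_ (h1C h hh r m hmA hmP hm)
      gcongr; omega

theorem main_bound {P H : Subgroup G} [P.Normal] [H.Normal] (hHP : H ≤ P) (hP : P.index ≠ 0)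
    {SA TA : Subgroup G → Set G} {δ : ℕ → ℕ} (hδ : Monotone δ)
    {A : Subgroup G} (hA : Subgroup.closure (SA A) = A)
    (hTf : (TA A).Finite) (hTH : TA A ⊆ H)
    (hd : ∀ r, ∀ k ∈ A, k ∈ H → k ∈ bl (SA A) r → k ∈ bl (TA A) (δ r))
    (hPA : P ≤ A ⊔ H)
    (hg : ∀ h, Good P H SA δ A A h) (S : Set G) (hS : S.Finite) :
    ∃ T0 : Set G, T0.Finite ∧ T0 ⊆ H ∧ ∃ C : ℕ, ∀ n, ∀ g ∈ H, g ∈ bl S n →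
      g ∈ bl T0 (n * (C * (δ (C * (n + 1)) + 1)) + δ (C * n)) := by
  obtain ⟨U, hUf, -, hUP, hU⟩ := schreier P hP ⊤ S hS (by simp)
  set U' : Set G := insert 1 (U ∪ U⁻¹) with hU'
  have hU'f : U'.Finite := (hUf.union hUf.inv).insert 1
  have hU'P : ∀ u ∈ U', u ∈ P := by
    rintro s (rfl | hs | hs)
    · exact P.one_mem
    · exact hUP hs
    · simpa using P.inv_mem (hUP hs)
  have hf : ∀ u : G, ∃ v : G, u ∈ U' → v ∈ A ∧ u * v⁻¹ ∈ H := by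
    intro u
    by_cases hu : u ∈ U'
    · have := hPA (hU'P u hu)
      rw [sup_comm, Subgroup.mem_sup_of_normal_left] at this
      obtain ⟨h, hh, v, hv, e⟩ := this
      refine ⟨v, fun _ => ⟨hv, ?_⟩⟩
      rw [← e]; simpa using hh
    · exact ⟨1, fun h => absurd h hu⟩
  choose s hs using hf
  have hsP : ∀ u ∈ U', s u ∈ P := by
    intro u hu
    have := P.mul_mem (P.inv_mem (hHP (hs u hu).2)) (hU'P u hu)
    simpa using this
  obtain ⟨c, hc⟩ := bl_exists_set (S := SA A) (hU'f.image s) (by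
    rintro _ ⟨u, hu, rfl⟩; rw [hA]; exact (hs u hu).1)
  obtain ⟨T0, hT0, hT0H, C, hC⟩ := conj_cheap_set (P := P) (A := A) (SA := SA) hδ
    (fun h hh => conj_cheap hδ hTf hTH hd hh (hg h))
    (hU'f.image fun u => u * (s u)⁻¹) (by rintro _ ⟨u, hu, rfl⟩; exact (hs u hu).2)
  refine ⟨T0 ∪ TA A, hT0.union hTf, Set.union_subset hT0H hTH, C * (c + 1) + c, ?_⟩
  intro n g hgH hgS
  have hgU := hU n g hgS (hHP hgH)
  have key : ∀ i, i ≤ n → ∀ y ∈ bl U i, ∃ k m, m ∈ A ∧ m ∈ P ∧ m ∈ bl (SA A) (c * i) ∧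
      k ∈ bl T0 (i * (C * (δ (C * (c * n + 1)) + 1))) ∧ y = k * m := by
    intro i
    induction i with
    | zero =>
      intro _ y hy
      have : y = 1 := by simpa [bl] using hy
      subst this
      exact ⟨1, 1, A.one_mem, P.one_mem, bl_one_mem _ _, bl_one_mem _ _, by simp⟩
    | succ i ih =>
      intro hi y hy
      have hy' : y ∈ bl U i * U' := by unfold bl at *; rw [← pow_succ]; exact hy
      obtain ⟨a, ha, u, hu, rfl⟩ := hy'
      obtain ⟨k, m, hmA, hmP, hm, hk, rfl⟩ := ih (by omega) a ha
      refine ⟨k * (m * (u * (s u)⁻¹) * m⁻¹), m * s u, A.mul_mem hmA (hs u hu).1,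
        P.mul_mem hmP (hsP u hu), bl_mul hm (hc ⟨u, hu, rfl⟩), ?_, by
          show k * m * u = _
          group⟩
      rw [add_mul, one_mul]
      refine bl_mul hk (bl_mono subset_rfl ?_ (hC _ ⟨u, hu, rfl⟩ _ m hmA hmP hm))
      have : δ (C * (c * i + 1)) ≤ δ (C * (c * n + 1)) := hδ (by gcongr; omega)
      gcongr
  obtain ⟨k, m, hmA, hmP, hm, hk, rfl⟩ := key n le_rfl g hgU
  have hkH : k ∈ H := bl_sub hT0H _ hk
  have hmH : m ∈ H := by
    have := H.mul_mem (H.inv_mem hkH) hgH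
    simpa using this
  refine bl_mono subset_rfl ?_ (bl_mul (bl_mono Set.subset_union_left le_rfl hk)
    (bl_mono Set.subset_union_right le_rfl (hd _ m hmA hmH hm)))
  have i1 : C * (c * n + 1) ≤ (C * (c + 1) + c) * (n + 1) := by
    have : c * n + 1 ≤ (c + 1) * (n + 1) := by nlinarith
    calc _ ≤ C * ((c + 1) * (n + 1)) := Nat.mul_le_mul_left _ this
      _ ≤ _ := by rw [← mul_assoc]; gcongr; omega
  have i2 : c * n ≤ (C * (c + 1) + c) * n := by gcongr; omega
  have j1 := hδ i1
  have j2 := hδ i2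
  have j3 : C ≤ C * (c + 1) + c := by nlinarith [Nat.zero_le (C * c)]
  gcongr

theorem setup (H : Subgroup G) [H.Normal] (𝒜 : Finset (Subgroup G)) (hne : 𝒜.Nonempty)
    (hgen : Subgroup.closure (⋃ A ∈ 𝒜, (A : Set G)) = ⊤)
    (hchain : ∀ A ∈ 𝒜, ∀ A' ∈ 𝒜, ∃ (n : ℕ) (c : Fin (n + 1) → Subgroup G),
      (∀ j, c j ∈ 𝒜) ∧ c 0 = A ∧ c (Fin.last n) = A' ∧
      ∀ j : Fin n,
        (Subgroup.map (QuotientGroup.mk' H) (c j.castSucc ⊓ c j.succ)).index ≠ 0)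
    (SA TA : Subgroup G → Set G) (δ : ℕ → ℕ) (hδ : Monotone δ)
    (hSA : ∀ A ∈ 𝒜, (SA A).Finite ∧ Subgroup.closure (SA A) = A)
    (hTA : ∀ A ∈ 𝒜, (TA A).Finite ∧ TA A ⊆ H)
    (hd : ∀ A ∈ 𝒜, ∀ r, ∀ k ∈ A, k ∈ H → k ∈ bl (SA A) r → k ∈ bl (TA A) (δ r))
    (S : Set G) (hS : S.Finite) :
    ∃ T0 : Set G, T0.Finite ∧ T0 ⊆ H ∧ ∃ C : ℕ, ∀ n, ∀ g ∈ H, g ∈ bl S n →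
      g ∈ bl T0 (n * (C * (δ (C * (n + 1)) + 1)) + δ (C * n)) := by
  classical
  have hidx : ∀ K : Subgroup G, (Subgroup.map (QuotientGroup.mk' H) K).index = (K ⊔ H).index := by
    intro K
    rw [Subgroup.index_map, QuotientGroup.ker_mk', QuotientGroup.range_mk']
    simp
  obtain ⟨A0, hA0⟩ := hne
  have hA0i : (A0 ⊔ H).index ≠ 0 := by
    by_cases h : ∃ A' ∈ 𝒜, A' ≠ A0
    · obtain ⟨A', hA', hne⟩ := h
      obtain ⟨n, c, hc, h0, hl, he⟩ := hchain A0 hA0 A' hA'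
      cases n with
      | zero => exact absurd (hl.symm.trans h0) hne
      | succ n =>
        have h1 := he 0
        rw [hidx] at h1
        refine fun h2 => h1 (Nat.eq_zero_of_zero_dvd (h2.symm.dvd.trans ?_))
        refine Subgroup.index_dvd_of_le (sup_le_sup_right ?_ _)
        rw [← h0]; exact inf_le_left
    · push Not at h
      have : A0 = ⊤ := by
        rw [eq_top_iff, ← hgen, Subgroup.closure_le]
        intro x hx
        simp only [Set.mem_iUnion] at hx
        obtain ⟨A, hA, hx⟩ := hx
        rw [← h A hA]; exact hx
      rw [this]; simp
  set E := (𝒜 ×ˢ 𝒜).filter fun p => ((p.1 ⊓ p.2) ⊔ H).index ≠ 0 with hE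
  set P0 : Subgroup G := ⨅ p : E, ((p.1.1 ⊓ p.1.2) ⊔ H) with hP0
  have hP0i : P0.index ≠ 0 := Subgroup.index_iInf_ne_zero fun p => (Finset.mem_filter.1 p.2).2
  have hHP0 : H ≤ P0 := le_iInf fun p => le_sup_right
  set P := P0.normalCore with hPdef
  have hHP : H ≤ P := Subgroup.normal_le_normalCore.2 hHP0
  have hP : P.index ≠ 0 := by
    have : P0.FiniteIndex := ⟨hP0i⟩
    exact (inferInstance : P0.normalCore.FiniteIndex).index_ne_zero
  have hPE : ∀ A ∈ 𝒜, ∀ A' ∈ 𝒜, ((A ⊓ A') ⊔ H).index ≠ 0 → P ≤ (A ⊓ A') ⊔ H := by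
    intro A hA A' hA' h
    exact (Subgroup.normalCore_le P0).trans (iInf_le (fun p : E => ((p.1.1 ⊓ p.1.2) ⊔ H))
      ⟨(A, A'), Finset.mem_filter.2 ⟨Finset.mk_mem_product hA hA', h⟩⟩)
  have g1 : ∀ A ∈ 𝒜, ∀ A' ∈ 𝒜, Good P H SA δ A A' 1 := by
    intro A hA A' hA'
    obtain ⟨n, c, hc, h0, hl, he⟩ := hchain A hA A' hA'
    have : ∀ j, Good P H SA δ A (c j) 1 := by
      intro j
      induction j using Fin.induction with
      | zero => rw [h0]; exact good_self (hSA A hA).2 A.one_mem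
      | succ j ih =>
        have h2 : Good P H SA δ (c j.castSucc) (c j.succ) 1 := by
          refine good_edge hHP hP hδ (hSA _ (hc _)).1 (hSA _ (hc _)).2 (hSA _ (hc _)).2
            (hTA _ (hc _)).1 (hTA _ (hc _)).2 (hd _ (hc _)) (hPE _ (hc _) _ (hc _) ?_)
          rw [← hidx]; exact he j
        simpa using ih.comp hδ h2
    rw [← hl]; exact this _
  have g2 : ∀ A ∈ 𝒜, ∀ w, Good P H SA δ A A0 w := by
    intro A hA w
    have hw : w ∈ Subgroup.closure (⋃ A ∈ 𝒜, (A : Set G)) := by rw [hgen]; trivial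
    induction hw using Subgroup.closure_induction_left with
    | one => exact g1 A hA A0 hA0
    | mul_left x hx y _ ih =>
      simp only [Set.mem_iUnion] at hx
      obtain ⟨B, hB, hx⟩ := hx
      have := ((g1 A hA B hB).comp hδ (good_self (hSA B hB).2 hx)).comp hδ
        ((g1 B hB A hA).comp hδ ih)
      simpa using this
    | inv_mul_cancel x hx y _ ih =>
      simp only [Set.mem_iUnion] at hx
      obtain ⟨B, hB, hx⟩ := hx
      have := ((g1 A hA B hB).comp hδ (good_self (hSA B hB).2 (B.inv_mem hx))).comp hδ
        ((g1 B hB A hA).comp hδ ih)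
      simpa using this
  refine main_bound hHP hP hδ (hSA A0 hA0).2 (hTA A0 hA0).1 (hTA A0 hA0).2 (hd A0 hA0) ?_
    (g2 A0 hA0) S hS
  have := hPE A0 hA0 A0 hA0 (by rwa [inf_idem])
  rwa [inf_idem] at this

end helpers

theorem stmt1 {G : Type*} [Group G] (H : Subgroup G) [H.Normal]
    (hGfg : Group.FG G) (𝒜 : Finset (Subgroup G))
    (hgen : Subgroup.closure (⋃ A ∈ 𝒜, (A : Set G)) = ⊤)
    (hAfg : ∀ A ∈ 𝒜, Subgroup.FG A)
    (hAHfg : ∀ A ∈ 𝒜, Subgroup.FG (A ⊓ H))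
    (hchain : ∀ A ∈ 𝒜, ∀ A' ∈ 𝒜, ∃ (n : ℕ) (c : Fin (n + 1) → Subgroup G),
      (∀ j, c j ∈ 𝒜) ∧ c 0 = A ∧ c (Fin.last n) = A' ∧
      ∀ j : Fin n,
        (Subgroup.map (QuotientGroup.mk' H) (c j.castSucc ⊓ c j.succ)).index ≠ 0) :
    Subgroup.FG H ∧
    ∀ (S T : Set G) (SA TA : Subgroup G → Set G),
      S.Finite → Subgroup.closure S = ⊤ →
      T.Finite → T ⊆ (H : Set G) → Subgroup.closure T = H →
      (∀ A ∈ 𝒜, (SA A).Finite ∧ SA A ⊆ (A : Set G) ∧ Subgroup.closure (SA A) = A) →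
      (∀ A ∈ 𝒜, (TA A).Finite ∧ TA A ⊆ ((A ⊓ H : Subgroup G) : Set G) ∧
        Subgroup.closure (TA A) = A ⊓ H) →
      Dominated (distortion S T H)
        (fun n => n * 𝒜.sup fun A => distortion (SA A) (TA A) (A ⊓ H) n) := by
  have core : ∀ (S : Set G) (SA TA : Subgroup G → Set G), S.Finite → 𝒜.Nonempty →
      (∀ A ∈ 𝒜, (SA A).Finite ∧ SA A ⊆ (A : Set G) ∧ Subgroup.closure (SA A) = A) →
      (∀ A ∈ 𝒜, (TA A).Finite ∧ TA A ⊆ ((A ⊓ H : Subgroup G) : Set G) ∧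
        Subgroup.closure (TA A) = A ⊓ H) →
      Monotone (fun n => 𝒜.sup fun A => distortion (SA A) (TA A) (A ⊓ H) n) ∧
      ∃ T0 : Set G, T0.Finite ∧ T0 ⊆ H ∧ ∃ C : ℕ, ∀ n, ∀ g ∈ H, g ∈ bl S n →
      g ∈ bl T0 (n * (C * ((𝒜.sup fun A => distortion (SA A) (TA A) (A ⊓ H) (C * (n + 1))) + 1))
        + (𝒜.sup fun A => distortion (SA A) (TA A) (A ⊓ H) (C * n))) := by
    intro S SA TA hS hne hSA hTA
    have hle : ∀ A ∈ 𝒜, A ⊓ H ≤ Subgroup.closure (SA A) := fun A hA => by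
      rw [(hSA A hA).2.2]; exact inf_le_left
    have hmono : Monotone (fun n => 𝒜.sup fun A => distortion (SA A) (TA A) (A ⊓ H) n) := by
      intro a b hab
      exact Finset.sup_mono_fun fun A hA => dist_mono (TA A) (hSA A hA).1 (hle A hA) hab
    refine ⟨hmono, setup H 𝒜 hne hgen hchain SA TA _ hmono
      (fun A hA => ⟨(hSA A hA).1, (hSA A hA).2.2⟩)
      (fun A hA => ⟨(hTA A hA).1, fun x hx => ((hTA A hA).2.1 hx).2⟩) ?_ S hS⟩
    intro A hA r k hkA hkH hk
    have h1 := mem_bl_dist (T := TA A) (hSA A hA).1 (hle A hA) (hTA A hA).2.2.ge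
      (show k ∈ A ⊓ H from ⟨hkA, hkH⟩) hk
    exact bl_mono subset_rfl
      (Finset.le_sup (f := fun A => distortion (SA A) (TA A) (A ⊓ H) r) hA) h1
  rcases 𝒜.eq_empty_or_nonempty with rfl | hne
  · have hsub : ∀ g : G, g = 1 := by
      intro g
      have : g ∈ (⊤ : Subgroup G) := trivial
      rw [← hgen] at this
      simpa using this
    refine ⟨⟨∅, ?_⟩, ?_⟩
    · ext g; rw [hsub g]; simp [H.one_mem, Subgroup.one_mem]
    · intro S T SA TA _ _ _ _ _ _ _
      refine ⟨1, 1, 1, 0, one_pos, one_pos, one_pos, fun x _ => ?_⟩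
      have : distortion S T H x ≤ 0 := by
        refine csSup_le' ?_
        rintro n ⟨h, _, _, rfl⟩
        rw [hsub h]; exact wl_le (bl_one_mem T 0)
      omega
  refine ⟨?_, ?_⟩
  · obtain ⟨S, hS⟩ := hGfg.out
    have h1 : ∀ A : Subgroup G, ∃ s : Finset G, A ∈ 𝒜 → Subgroup.closure (s : Set G) = A := by
      intro A
      by_cases hA : A ∈ 𝒜
      · obtain ⟨s, hs⟩ := hAfg A hA; exact ⟨s, fun _ => hs⟩
      · exact ⟨∅, fun h => absurd h hA⟩
    have h2 : ∀ A : Subgroup G, ∃ s : Finset G, A ∈ 𝒜 →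
        Subgroup.closure (s : Set G) = A ⊓ H := by
      intro A
      by_cases hA : A ∈ 𝒜
      · obtain ⟨s, hs⟩ := hAHfg A hA; exact ⟨s, fun _ => hs⟩
      · exact ⟨∅, fun h => absurd h hA⟩
    choose SA hSA using h1
    choose TA hTA using h2
    obtain ⟨-, T0, hT0, hT0H, C, hC⟩ := core (S : Set G) (fun A => (SA A : Set G))
      (fun A => (TA A : Set G)) S.finite_toSet hne
      (fun A hA => ⟨Finset.finite_toSet _, (Subgroup.closure_le A).1 (hSA A hA).le, hSA A hA⟩)
      (fun A hA => ⟨Finset.finite_toSet _, (Subgroup.closure_le (A ⊓ H)).1 (hTA A hA).le,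
        hTA A hA⟩)
    rw [Subgroup.fg_iff]
    refine ⟨T0, le_antisymm ((Subgroup.closure_le H).2 hT0H) ?_, hT0⟩
    intro g hg
    obtain ⟨n, hn⟩ := bl_exists (S := (S : Set G)) (x := g) (by rw [hS]; trivial)
    exact bl_sub Subgroup.subset_closure _ (hC n g hg hn)
  · intro S T SA TA hS hScl hT hTH hTcl hSA hTA
    obtain ⟨hmono, T0, hT0, hT0H, C, hC⟩ := core S SA TA hS hne hSA hTA
    obtain ⟨c, hc⟩ := bl_exists_set (S := T) hT0 (by rw [hTcl]; exact hT0H)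
    refine ⟨c * (C + 1) + 1, 2 * C + 1, c * C + 1, 0, by omega, by omega, by omega, ?_⟩
    intro x hx
    refine csSup_le' ?_
    rintro n ⟨h, hh, hhx, rfl⟩
    have hb : h ∈ bl S x := bl_mono subset_rfl hhx (mem_bl_wl (by rw [hScl]; trivial))
    refine (wl_le (bl_bl hc _ (hC x h hh hb))).trans ?_
    have j1 := hmono (show C * (x + 1) ≤ (2 * C + 1) * x by nlinarith)
    have j2 := hmono (show C * x ≤ (2 * C + 1) * x by nlinarith)
    simp only at j1 j2
    show _ ≤ _ * ((2 * C + 1) * x * 𝒜.sup fun A => distortion (SA A) (TA A) (A ⊓ H)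
      ((2 * C + 1) * x)) + _
    set D := 𝒜.sup fun A => distortion (SA A) (TA A) (A ⊓ H) ((2 * C + 1) * x) with hD
    have hx1 : 1 ≤ (2 * C + 1) * x := Nat.mul_pos (by omega) hx
    have hx2 : x ≤ (2 * C + 1) * x := Nat.le_mul_of_pos_left _ (by omega)
    calc _ ≤ c * (x * (C * (D + 1)) + D) := by gcongr
      _ = c * C * (x * D) + c * (1 * D) + c * C * x := by ring
      _ ≤ c * C * ((2 * C + 1) * x * D) + c * ((2 * C + 1) * x * D) + (c * C + 1) * x := by
          gcongr; omega
      _ = c * (C + 1) * ((2 * C + 1) * x * D) + (c * C + 1) * x := by ring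
      _ ≤ _ := by gcongr; omega
end

section
/- Let Γ be a connected finite simplicial graph with at least two vertices that is not a join, let p : A_Γ → ℤ be a group homomorphism mapping every vertex of Γ to a nonzero integer, and let N = ker p. Then N is finitely generated and the distortion of N in A_Γ is quadratic, i.e. Dist_{A_Γ}^N ∼ n². -/
/-- `f ∼ g`. -/
def FEquiv (f g : ℕ → ℕ) : Prop := Dominated f g ∧ Dominated g f

/-- The defining relators of the right-angled Artin group of a graph `Γ`. -/
def raagRels {V : Type*} (Γ : SimpleGraph V) : Set (FreeGroup V) :=
  {r | ∃ u v : V, Γ.Adj u v ∧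
    r = FreeGroup.of u * FreeGroup.of v * (FreeGroup.of u)⁻¹ * (FreeGroup.of v)⁻¹}

/-- The right-angled Artin group of a graph `Γ`. -/
abbrev RAAG {V : Type*} (Γ : SimpleGraph V) : Type _ := PresentedGroup (raagRels Γ)

/-- The standard generator of `RAAG Γ` associated to a vertex. -/
def raagGen {V : Type*} (Γ : SimpleGraph V) (v : V) : RAAG Γ := PresentedGroup.of v

/-- A graph is a join if its vertex set splits into two nonempty parts with every
vertex of one part adjacent to every vertex of the other. -/
def IsJoin {α : Type*} (Γ : SimpleGraph α) : Prop :=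
  ∃ V₁ V₂ : Set α, V₁.Nonempty ∧ V₂.Nonempty ∧ Disjoint V₁ V₂ ∧ V₁ ∪ V₂ = Set.univ ∧
    ∀ u ∈ V₁, ∀ v ∈ V₂, Γ.Adj u v

section BdTools

variable {G : Type*} [Group G]

def Bd (S : Set G) (n : ℕ) (g : G) : Prop :=
  ∃ l : List G, l.length ≤ n ∧ (∀ x ∈ l, x ∈ S ∨ x⁻¹ ∈ S) ∧ l.prod = g

theorem Bd.one {S : Set G} {n : ℕ} : Bd S n (1 : G) := ⟨[], by simp⟩

theorem Bd.mono {S : Set G} {n m : ℕ} {g : G} (h : Bd S n g) (hnm : n ≤ m) : Bd S m g := by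
  obtain ⟨l, h1, h2⟩ := h
  exact ⟨l, h1.trans hnm, h2⟩

theorem Bd.mul {S : Set G} {n m : ℕ} {g k : G} (h : Bd S n g) (h' : Bd S m k) :
    Bd S (n + m) (g * k) := by
  obtain ⟨l, h1, h2, h3⟩ := h
  obtain ⟨l', h1', h2', h3'⟩ := h'
  refine ⟨l ++ l', by simp; omega, ?_, by simp [h3, h3']⟩
  intro x hx
  rcases List.mem_append.1 hx with hx | hx
  · exact h2 x hx
  · exact h2' x hx

theorem Bd.inv {S : Set G} {n : ℕ} {g : G} (h : Bd S n g) : Bd S n g⁻¹ := by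
  obtain ⟨l, h1, h2, h3⟩ := h
  refine ⟨(l.map (fun x => x⁻¹)).reverse, by simpa using h1, ?_, ?_⟩
  · intro x hx
    simp only [List.mem_reverse, List.mem_map] at hx
    obtain ⟨y, hy, rfl⟩ := hx
    rcases h2 y hy with h | h
    · right; simpa using h
    · left; exact h
  · rw [← h3, List.prod_inv_reverse]

theorem Bd.of_mem {S : Set G} {g : G} (h : g ∈ S) : Bd S 1 g :=
  ⟨[g], by simp, by simp [h], by simp⟩

theorem Bd.of_mem' {S : Set G} {g : G} (h : g ∈ S ∨ g⁻¹ ∈ S) : Bd S 1 g :=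
  ⟨[g], by simp, by simp [h], by simp⟩

theorem Bd.npow {S : Set G} {n : ℕ} {g : G} (h : Bd S n g) (k : ℕ) : Bd S (n * k) (g ^ k) := by
  induction k with
  | zero => simpa using Bd.one
  | succ k ih => rw [pow_succ, Nat.mul_succ]; exact ih.mul h

theorem Bd.zpow {S : Set G} {n : ℕ} {g : G} (h : Bd S n g) (k : ℤ) :
    Bd S (n * k.natAbs) (g ^ k) := by
  rcases Int.natAbs_eq k with hk | hk
  · have := h.npow k.natAbs
    rw [← zpow_natCast, ← hk] at this; exact this
  · have := (h.npow k.natAbs).inv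
    rw [← zpow_natCast, ← zpow_neg, ← hk] at this; exact this

theorem Bd.trans {S T : Set G} {K n : ℕ} {g : G} (hST : ∀ x ∈ S, Bd T K x) (h : Bd S n g) :
    Bd T (K * n) g := by
  obtain ⟨l, h1, h2, h3⟩ := h
  suffices H : Bd T (K * l.length) g from H.mono (Nat.mul_le_mul_left _ h1)
  clear h1
  induction l generalizing g with
  | nil => simp at h3; subst h3; exact Bd.one
  | cons x l ih =>
    rw [List.prod_cons] at h3
    subst h3
    have hx : Bd T K x := by
      rcases h2 x (by simp) with h | h
      · exact hST x h
      · simpa using (hST _ h).inv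
    have := hx.mul (ih (fun y hy => h2 y (by simp [hy])) rfl)
    exact this.mono (by simp [Nat.mul_add]; omega)

theorem Bd.wordLength_le {S : Set G} {n : ℕ} {g : G} (h : Bd S n g) : wordLength S g ≤ n := by
  obtain ⟨l, h1, h2, h3⟩ := h
  have : _root_.wordLength S g ≤ l.length := Nat.sInf_le ⟨l, rfl, h2, h3⟩
  exact this.trans h1

theorem Bd.wordLength {S : Set G} {n : ℕ} {g : G} (h : Bd S n g) : Bd S (wordLength S g) g := by
  obtain ⟨l, h1, h2, h3⟩ := h
  have hne : {n | ∃ l : List G, l.length = n ∧ (∀ x ∈ l, x ∈ S ∨ x⁻¹ ∈ S) ∧ l.prod = g}.Nonempty :=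
    ⟨_, l, rfl, h2, h3⟩
  obtain ⟨l', h1', h2', h3'⟩ := Nat.sInf_mem hne
  exact ⟨l', h1'.le, h2', h3'⟩

theorem Bd.mem {S : Set G} {n : ℕ} {g : G} (h : Bd S n g) (H : Subgroup G) (hS : S ⊆ H) :
    g ∈ H := by
  obtain ⟨l, h1, h2, h3⟩ := h
  rw [← h3]
  apply Subgroup.list_prod_mem
  intro x hx
  rcases h2 x hx with h | h
  · exact hS h
  · simpa using H.inv_mem (hS h)

theorem exists_bd {S : Set G} {g : G} (h : g ∈ Subgroup.closure S) : ∃ n, Bd S n g := by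
  induction h using Subgroup.closure_induction with
  | mem x hx => exact ⟨1, Bd.of_mem hx⟩
  | one => exact ⟨0, Bd.one⟩
  | mul x y _ _ hx hy =>
    obtain ⟨n, hn⟩ := hx
    obtain ⟨m, hm⟩ := hy
    exact ⟨n + m, hn.mul hm⟩
  | inv x _ hx =>
    obtain ⟨n, hn⟩ := hx
    exact ⟨n, hn.inv⟩

theorem exists_bd_unif {S F : Set G} (hF : F.Finite) (h : ∀ x ∈ F, ∃ n, Bd S n x) :
    ∃ K, ∀ x ∈ F, Bd S K x := by
  classical
  choose! f hf using h
  refine ⟨∑ x ∈ hF.toFinset, f x, fun x hx => (hf x hx).mono ?_⟩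
  exact Finset.single_le_sum (f := f) (fun _ _ => Nat.zero_le _) (hF.mem_toFinset.2 hx)

theorem bd_finite {S : Set G} (hS : S.Finite) (n : ℕ) : {g | Bd S n g}.Finite := by
  have hS' : (S ∪ S⁻¹).Finite := hS.union hS.inv
  induction n with
  | zero =>
    refine (Set.finite_singleton (1 : G)).subset ?_
    rintro g ⟨l, h1, h2, h3⟩
    have : l = [] := List.length_eq_zero_iff.1 (Nat.le_zero.1 h1)
    subst this; simpa using h3.symm
  | succ n ih =>
    refine ((Set.finite_singleton (1 : G)).union (hS'.image2 (fun x y => x * y) ih)).subset ?_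
    rintro g ⟨l, h1, h2, h3⟩
    cases l with
    | nil => left; simpa using h3.symm
    | cons x l =>
      right
      refine ⟨x, ?_, l.prod, ⟨l, by simpa using h1, fun y hy => h2 y (by simp [hy]), rfl⟩, by simpa using h3⟩
      simpa using h2 x (by simp)

end BdTools

section Upper

theorem upper_aux {G : Type*} [Group G] {V : Type*} [Fintype V] (Γ : SimpleGraph V)
    (hconn : Γ.Connected) (s : V → G) (hs : Subgroup.closure (Set.range s) = ⊤)
    (hcomm : ∀ u v, Γ.Adj u v → Commute (s u) (s v))
    (p : G →* Multiplicative ℤ) (hp : ∀ v, p (s v) ≠ 1) :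
    ∃ F : Set G, F.Finite ∧ F ⊆ (p.ker : Set G) ∧ ∃ C : ℕ, ∀ h ∈ p.ker, ∀ r,
      Bd (Set.range s) r h → Bd F (C * r * r) h := by
  classical
  obtain ⟨v0⟩ := hconn.nonempty
  set S := Set.range s with hSdef
  have hSfin : S.Finite := Set.finite_range s
  set P : G → ℤ := fun g => Multiplicative.toAdd (p g) with hP
  have Pmul : ∀ g h, P (g * h) = P g + P h := fun g h => by simp [hP]
  have Pinv : ∀ g, P g⁻¹ = - P g := fun g => by simp [hP]
  have Pone : P 1 = 0 := by simp [hP]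
  have Pz : ∀ g (k : ℤ), P (g ^ k) = k * P g := fun g k => by simp [hP]
  have Pker : ∀ g, g ∈ p.ker ↔ P g = 0 := fun g => by
    rw [MonoidHom.mem_ker]; exact Iff.rfl
  set a : V → ℤ := fun v => P (s v) with ha
  have ha0 : ∀ v, a v ≠ 0 := fun v h => hp v h
  set L : ℕ := ∏ v, (a v).natAbs with hL
  have hLpos : 0 < L := Finset.prod_pos fun v _ => Int.natAbs_pos.2 (ha0 v)
  have hdvd : ∀ v, a v ∣ (L : ℤ) := fun v => by
    rw [← Int.natAbs_dvd_natAbs, Int.natAbs_natCast]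
    exact Finset.dvd_prod_of_mem _ (Finset.mem_univ v)
  have haL : ∀ v, (a v).natAbs ≤ L := fun v =>
    Nat.le_of_dvd hLpos (by simpa using Int.natAbs_dvd_natAbs.2 (hdvd v))
  set u : V → G := fun v => s v ^ ((L : ℤ) / a v) with hu
  have hPu : ∀ v, P (u v) = L := fun v => by
    rw [hu]; simp only [Pz]; exact Int.ediv_mul_cancel (hdvd v)
  have hBu : ∀ v, Bd S L (u v) := fun v => by
    refine ((Bd.of_mem (Set.mem_range_self v)).zpow _).mono ?_
    rw [one_mul]
    exact (Int.natAbs_ediv_le_natAbs _ _).trans (by simp)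
  have hucomm : ∀ v w, Γ.Adj v w → Commute (u v) (u w) := fun v w h =>
    ((hcomm v w h).zpow_zpow _ _)
  -- section
  have hsec : ∀ k : ℤ, ∃ g, (k ∈ Set.range P → P g = k) ∧ (k = 0 → g = 1) := by
    intro k
    by_cases hk0 : k = 0
    · exact ⟨1, fun _ => by rw [Pone, hk0], fun _ => rfl⟩
    · by_cases hk : k ∈ Set.range P
      · obtain ⟨g, hg⟩ := hk
        exact ⟨g, fun _ => hg, fun h => absurd h hk0⟩
      · exact ⟨1, fun h => absurd h hk, fun _ => rfl⟩
  choose t ht ht0 using hsec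
  obtain ⟨R1, hR1⟩ : ∃ K, ∀ x ∈ t '' (Set.Icc 0 (L : ℤ)), Bd S K x :=
    exists_bd_unif ((Set.finite_Icc _ _).image t) fun x _ => exists_bd (by rw [hs]; trivial)
  set R0 := R1 + 1 + R1 + L * 2 with hR0
  set R := R0 + (L + L) + R0 with hR
  set F : Set G := {g | g ∈ p.ker ∧ Bd S R g} with hF
  have hFfin : F.Finite := (bd_finite hSfin R).subset fun g hg => hg.2
  refine ⟨F, hFfin, fun g hg => hg.1, ?_⟩
  -- alpha
  have halpha : ∀ g, Bd S R0 g → ∀ v w (W : Γ.Walk v w) (q : ℤ),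
      Bd F (W.length * q.natAbs) (g * (u v ^ q * (u w ^ q)⁻¹) * g⁻¹) := by
    intro g hg v w W q
    induction W with
    | nil => simpa using Bd.one
    | @cons x y z hxy W ih =>
      have h1 : g * (u x * (u y)⁻¹) * g⁻¹ ∈ F := by
        refine ⟨?_, (((hg.mul ((hBu x).mul (hBu y).inv))).mul hg.inv)⟩
        rw [Pker]; simp only [Pmul, Pinv, hPu]; ring
      have h2 := (Bd.of_mem h1).zpow q
      have h3 : (g * (u x * (u y)⁻¹) * g⁻¹) ^ q = g * (u x ^ q * (u y ^ q)⁻¹) * g⁻¹ := by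
        rw [conj_zpow, ((hucomm x y hxy).inv_right).mul_zpow, inv_zpow]
      rw [h3] at h2
      have h4 := h2.mul ih
      have h5 : g * (u x ^ q * (u y ^ q)⁻¹) * g⁻¹ * (g * (u y ^ q * (u z ^ q)⁻¹) * g⁻¹)
        = g * (u x ^ q * (u z ^ q)⁻¹) * g⁻¹ := by group
      rw [h5] at h4
      refine h4.mono ?_
      rw [SimpleGraph.Walk.length_cons]; ring_nf; exact le_rfl
  choose W hW using fun v => (⟨(hconn.preconnected v0 v).some, trivial⟩ : ∃ W : Γ.Walk v0 v, True)
  set C1 := ∑ v, (W v).length with hC1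
  have hC1v : ∀ v, (W v).length ≤ C1 := fun v =>
    Finset.single_le_sum (f := fun v => (W v).length) (fun _ _ => Nat.zero_le _) (Finset.mem_univ v)
  have hal : ∀ g, Bd S R0 g → ∀ v (q : ℤ),
      Bd F (C1 * q.natAbs) (g * (u v0 ^ q * (u v ^ q)⁻¹) * g⁻¹) := fun g hg v q =>
    (halpha g hg v0 v (W v) q).mono (Nat.mul_le_mul_right _ (hC1v v))
  -- commutators
  have hcom : ∀ (q : ℤ) (l : List G), (∀ x ∈ l, x ∈ S ∨ x⁻¹ ∈ S) → l.length ≤ R0 →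
      Bd F (2 * C1 * q.natAbs * l.length) (u v0 ^ q * l.prod * (u v0 ^ q)⁻¹ * l.prod⁻¹) := by
    intro q l
    induction l using List.reverseRecOn with
    | nil => intro _ _; simpa using Bd.one
    | append_singleton l x ih =>
      intro hl hlen
      have hlen' : l.length + 1 ≤ R0 := by simpa using hlen
      have ih' := ih (fun y hy => hl y (by simp [hy])) (by omega)
      have hx := hl x (by simp)
      have hg : Bd S R0 l.prod := ⟨l, by omega, fun y hy => hl y (by simp [hy]), rfl⟩
      have hgx : Bd S R0 (l.prod * x) := ⟨l ++ [x], hlen, hl, by simp⟩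
      obtain ⟨v, hv⟩ : ∃ v, Commute x (u v) := by
        rcases hx with ⟨v, rfl⟩ | ⟨v, hv⟩
        · exact ⟨v, (Commute.refl _).zpow_right _⟩
        · refine ⟨v, ?_⟩
          have : x = (s v)⁻¹ := by rw [hv]; simp
          rw [this]; exact ((Commute.refl _).zpow_right _).inv_left
      have e1 := hal _ hg v q
      have e2 := (hal _ hgx v q).inv
      have hvq : Commute x (u v ^ q) := hv.zpow_right q
      have e3 := (ih'.mul e1).mul e2
      have : u v0 ^ q * l.prod * (u v0 ^ q)⁻¹ * l.prod⁻¹ * (l.prod * (u v0 ^ q * (u v ^ q)⁻¹) * l.prod⁻¹)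
        * (l.prod * x * (u v0 ^ q * (u v ^ q)⁻¹) * (l.prod * x)⁻¹)⁻¹ =
        u v0 ^ q * (l ++ [x]).prod * (u v0 ^ q)⁻¹ * (l ++ [x]).prod⁻¹ := by
        rw [List.prod_append, List.prod_singleton]
        generalize u v0 ^ q = A at *
        generalize u v ^ q = B at *
        generalize l.prod = g at *
        have h : B⁻¹ * x * B = x := by rw [mul_assoc, hvq.eq]; group
        calc _ = A * g * (B⁻¹ * x * B) * A⁻¹ * (g * x)⁻¹ := by group
          _ = _ := by rw [h]; group
      rw [this] at e3
      refine e3.mono ?_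
      simp only [List.length_append, List.length_singleton]; ring_nf; exact le_rfl
  have hconj : ∀ (q : ℤ) y, y ∈ p.ker → Bd S R0 y →
      Bd F (2 * C1 * R0 * q.natAbs + 1) (u v0 ^ q * y * (u v0 ^ q)⁻¹) := by
    intro q y hy hB
    obtain ⟨l, h1, h2, h3⟩ := hB
    have hyF : y ∈ F := ⟨hy, l, h1.trans (by omega), h2, h3⟩
    have e := (hcom q l h2 h1).mul (Bd.of_mem hyF)
    rw [h3] at e
    have : u v0 ^ q * y * (u v0 ^ q)⁻¹ * y⁻¹ * y = u v0 ^ q * y * (u v0 ^ q)⁻¹ := by group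
    rw [this] at e
    refine e.mono ?_
    have : 2 * C1 * q.natAbs * l.length ≤ 2 * C1 * q.natAbs * R0 := Nat.mul_le_mul_left _ h1
    nlinarith
  set σ : ℤ → G := fun k => u v0 ^ (k / L) * t (k % L) with hσ
  have hLz : (0 : ℤ) < L := by exact_mod_cast hLpos
  have hmodB : ∀ k : ℤ, Bd S R1 (t (k % L)) := fun k =>
    hR1 _ ⟨_, ⟨Int.emod_nonneg _ hLz.ne', (Int.emod_lt_of_pos _ hLz).le⟩, rfl⟩
  have hmodP : ∀ k : ℤ, k ∈ Set.range P → P (t (k % L)) = k % L := by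
    rintro k ⟨g, hg⟩
    apply ht
    refine ⟨g * u v0 ^ (-(k / L)), ?_⟩
    rw [Pmul, Pz, hPu, hg, Int.emod_def]; ring
  have hstep : ∀ k : ℤ, k ∈ Set.range P → ∀ x, (x ∈ S ∨ x⁻¹ ∈ S) →
      Bd F (2 * C1 * R0 * k.natAbs + 1) (σ k * x * (σ (k + P x))⁻¹) := by
    intro k hk x hx
    have hPx : |P x| ≤ L := by
      rw [abs_le]
      rcases hx with ⟨v, rfl⟩ | ⟨v, hv⟩
      · have := haL v; simp only [ha] at this; omega
      · have h1 := haL v; simp only [ha] at h1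
        rw [hv, Pinv] at h1; omega
    have hk' : k + P x ∈ Set.range P := by
      obtain ⟨g, hg⟩ := hk
      exact ⟨g * x, by rw [Pmul, hg]⟩
    set q := k / L with hq
    set q' := (k + P x) / L with hq'
    set y := t (k % L) * x * (t ((k + P x) % L))⁻¹ * u v0 ^ (q - q') with hy
    have hyP : y ∈ p.ker := by
      rw [Pker, hy]
      simp only [Pmul, Pinv, Pz, hPu, hmodP k hk, hmodP _ hk']
      simp only [Int.emod_def, ← hq, ← hq']
      ring
    have hqq : (q - q').natAbs ≤ 2 := by
      have e1 := Int.emod_add_mul_ediv k L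
      have e2 := Int.emod_add_mul_ediv (k + P x) L
      have e3 := Int.emod_nonneg k hLz.ne'
      have e4 := Int.emod_lt_of_pos k hLz
      have e5 := Int.emod_nonneg (k + P x) hLz.ne'
      have e6 := Int.emod_lt_of_pos (k + P x) hLz
      rw [abs_le] at hPx
      rw [← hq] at e1
      rw [← hq'] at e2
      have h1 : q - q' ≤ 2 := by nlinarith
      have h2 : -2 ≤ q - q' := by nlinarith
      omega
    have hyB : Bd S R0 y := by
      refine ((((hmodB k).mul (Bd.of_mem' hx)).mul (hmodB _).inv).mul ((hBu v0).zpow _)).mono ?_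
      rw [hR0]
      have := Nat.mul_le_mul_left L hqq
      omega
    have e := hconj q y hyP hyB
    have : u v0 ^ q * y * (u v0 ^ q)⁻¹ = σ k * x * (σ (k + P x))⁻¹ := by
      simp only [hσ, ← hq, ← hq', hy, zpow_sub]; group
    rw [this] at e
    refine e.mono ?_
    have : q.natAbs ≤ k.natAbs := Int.natAbs_ediv_le_natAbs _ _
    have := Nat.mul_le_mul_left (2 * C1 * R0) this
    omega
  have hPl : ∀ x, (x ∈ S ∨ x⁻¹ ∈ S) → (P x).natAbs ≤ L := by
    rintro x (⟨v, rfl⟩ | ⟨v, hv⟩)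
    · exact haL v
    · have h1 := haL v; simp only [ha] at h1
      rw [hv, Pinv] at h1; omega
  have hlist : ∀ l : List G, (∀ x ∈ l, x ∈ S ∨ x⁻¹ ∈ S) → ∀ k : ℤ, k ∈ Set.range P →
      Bd F ((2 * C1 * R0 * (k.natAbs + L * l.length) + 1) * l.length)
        (σ k * l.prod * (σ (k + P l.prod))⁻¹) := by
    intro l
    induction l with
    | nil => intro _ k _; simpa [Pone] using Bd.one
    | cons x l ih =>
      intro hl k hk
      have hx := hl x (by simp)
      have hk' : k + P x ∈ Set.range P := by
        obtain ⟨g, hg⟩ := hk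
        exact ⟨g * x, by rw [Pmul, hg]⟩
      have e := (hstep k hk x hx).mul (ih (fun y hy => hl y (by simp [hy])) _ hk')
      have : σ k * x * (σ (k + P x))⁻¹ * (σ (k + P x) * l.prod * (σ (k + P x + P l.prod))⁻¹)
        = σ k * (x :: l).prod * (σ (k + P (x :: l).prod))⁻¹ := by
        rw [List.prod_cons, Pmul, ← add_assoc]; group
      rw [this] at e
      refine e.mono ?_
      have h1 : (k + P x).natAbs ≤ k.natAbs + L := (Int.natAbs_add_le _ _).trans
        (Nat.add_le_add_left (hPl x hx) _)
      rw [List.length_cons]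
      generalize 2 * C1 * R0 = c
      have h2 : c * ((k + P x).natAbs + L * l.length) ≤ c * (k.natAbs + L * (l.length + 1)) :=
        Nat.mul_le_mul_left _ (by rw [Nat.mul_succ]; omega)
      have h3 : c * k.natAbs ≤ c * (k.natAbs + L * (l.length + 1)) :=
        Nat.mul_le_mul_left _ (by omega)
      have h4 := Nat.mul_le_mul_right l.length (Nat.add_le_add_right h2 1)
      rw [Nat.mul_succ]
      omega
  refine ⟨2 * C1 * R0 * L + 1, ?_⟩
  rintro h hh r ⟨l, h1, h2, h3⟩
  have e := hlist l h2 0 ⟨1, Pone⟩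
  have hσ0 : σ 0 = 1 := by simp [hσ, ht0]
  rw [h3, (Pker h).1 hh, add_zero, hσ0] at e
  have e' : Bd F ((2 * C1 * R0 * (L * l.length) + 1) * l.length) h := by simpa using e
  refine e'.mono ?_
  rcases Nat.eq_zero_or_pos l.length with h0 | h0
  · rw [h0]; simp
  · calc _ ≤ (2 * C1 * R0 * L + 1) * l.length * l.length := by
          apply Nat.mul_le_mul_right
          generalize 2 * C1 * R0 = c
          nlinarith
      _ ≤ _ := Nat.mul_le_mul (Nat.mul_le_mul_left _ h1) h1

end Upper
section Piling

variable {V : Type*} (Γ : SimpleGraph V)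

def linv (l : V × Bool) : V × Bool := (l.1, !l.2)

theorem linv_linv (l : V × Bool) : linv (linv l) = l := by simp [linv]

theorem linv_fst (l : V × Bool) : (linv l).1 = l.1 := rfl

def foot (v : V) : Set (V × V) := {i | ¬ Γ.Adj i.1 i.2 ∧ (i.1 = v ∨ i.2 = v)}

theorem foot_disj {u v : V} (h : Γ.Adj u v) {i : V × V} (hi : i ∈ foot Γ u) : i ∉ foot Γ v := by
  rintro ⟨h1, h2⟩
  obtain ⟨h3, h4⟩ := hi
  obtain ⟨a, b⟩ := i
  simp only at *
  have := h.ne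
  rcases h2 with rfl | rfl <;> rcases h4 with rfl | rfl
  · exact this rfl
  · exact h1 h.symm
  · exact h1 h
  · exact this rfl

theorem mem_foot_left {u v : V} (h : ¬ Γ.Adj u v) : (u, v) ∈ foot Γ u := ⟨h, Or.inl rfl⟩

theorem mem_foot_right {u v : V} (h : ¬ Γ.Adj u v) : (u, v) ∈ foot Γ v := ⟨h, Or.inr rfl⟩

theorem mem_foot_diag {u v : V} : (u, u) ∈ foot Γ v ↔ u = v := by
  simp [foot]

open Classical in
noncomputable def push (l : V × Bool) (x : V × V → List (V × Bool)) : V × V → List (V × Bool) :=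
  fun i => if i ∈ foot Γ l.1 then l :: x i else x i

theorem push_mem {l : V × Bool} {x : V × V → List (V × Bool)} {i : V × V} (h : i ∈ foot Γ l.1) :
    push Γ l x i = l :: x i := by simp [push, h]

theorem push_nmem {l : V × Bool} {x : V × V → List (V × Bool)} {i : V × V} (h : i ∉ foot Γ l.1) :
    push Γ l x i = x i := by simp [push, h]

theorem push_inj {l : V × Bool} {x y : V × V → List (V × Bool)} (h : push Γ l x = push Γ l y) :
    x = y := by
  funext i
  have := congrFun h i
  by_cases hi : i ∈ foot Γ l.1
  · rw [push_mem Γ hi, push_mem Γ hi] at this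
    exact (List.cons.inj this).2
  · rwa [push_nmem Γ hi, push_nmem Γ hi] at this

theorem push_comm {l l' : V × Bool} (h : Γ.Adj l.1 l'.1) (x : V × V → List (V × Bool)) :
    push Γ l (push Γ l' x) = push Γ l' (push Γ l x) := by
  funext i
  by_cases hi : i ∈ foot Γ l.1
  · have hi' := foot_disj Γ h hi
    rw [push_mem Γ hi, push_nmem Γ hi', push_nmem Γ hi', push_mem Γ hi]
  · by_cases hi' : i ∈ foot Γ l'.1
    · rw [push_nmem Γ hi, push_mem Γ hi', push_mem Γ hi', push_nmem Γ hi]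
    · rw [push_nmem Γ hi, push_nmem Γ hi', push_nmem Γ hi', push_nmem Γ hi]

theorem push_diamond {l l' : V × Bool} {y y' : V × V → List (V × Bool)} (hne : l ≠ l')
    (h : push Γ l y = push Γ l' y') :
    Γ.Adj l.1 l'.1 ∧ ∃ z, y' = push Γ l z ∧ y = push Γ l' z := by
  classical
  have hadj : Γ.Adj l.1 l'.1 := by
    by_contra hn
    have := congrFun h (l.1, l'.1)
    rw [push_mem Γ (mem_foot_left Γ hn), push_mem Γ (mem_foot_right Γ hn)] at this
    exact hne (List.cons.inj this).1
  refine ⟨hadj, fun i => if i ∈ foot Γ l.1 then y i else y' i, ?_, ?_⟩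
  · funext i
    have := congrFun h i
    by_cases hi : i ∈ foot Γ l.1
    · have hi' := foot_disj Γ hadj hi
      rw [push_mem Γ hi, push_nmem Γ hi'] at this
      rw [push_mem Γ hi, ← this]; simp [hi]
    · rw [push_nmem Γ hi]; simp [hi]
  · funext i
    have := congrFun h i
    by_cases hi : i ∈ foot Γ l.1
    · have hi' := foot_disj Γ hadj hi
      rw [push_nmem Γ hi']; simp [hi]
    · by_cases hi' : i ∈ foot Γ l'.1
      · rw [push_nmem Γ hi, push_mem Γ hi'] at this
        rw [push_mem Γ hi', this]; simp [hi]
      · rw [push_nmem Γ hi, push_nmem Γ hi'] at this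
        rw [push_nmem Γ hi', this]; simp [hi]

inductive Reach : (V × V → List (V × Bool)) → Prop
  | nil : Reach (fun _ => [])
  | cons (l : V × Bool) (x : V × V → List (V × Bool)) (hx : Reach x)
      (h : ∀ y, x ≠ push Γ (linv l) y) : Reach (push Γ l x)

theorem Reach.pop {x : V × V → List (V × Bool)} (hx : Reach Γ x) :
    ∀ l y, x = push Γ l y → Reach Γ y ∧ ∀ z, y ≠ push Γ (linv l) z := by
  induction hx with
  | nil =>
    intro l y h
    have := congrFun h (l.1, l.1)
    rw [push_mem Γ ((mem_foot_diag Γ).2 rfl)] at this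
    simp at this
  | cons l' x' hx' hc ih =>
    intro l y h
    by_cases hl : l' = l
    · subst hl
      have := push_inj Γ h
      subst this
      exact ⟨hx', hc⟩
    · obtain ⟨hadj, z, hy, hx⟩ := push_diamond Γ hl h
      obtain ⟨hz, hz'⟩ := ih l z hx
      refine ⟨?_, ?_⟩
      · rw [hy]
        refine Reach.cons l' z hz ?_
        intro w hw
        apply hc (push Γ l w)
        rw [hx, hw]
        exact push_comm Γ (l' := linv l') hadj.symm w
      · intro z' hz1
        rw [hy] at hz1
        have hne : l' ≠ linv l := by
          rintro rfl
          exact hadj.ne rfl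
        obtain ⟨_, w, _, hw⟩ := push_diamond Γ hne hz1
        exact hz' w hw

open Classical in
noncomputable def act (l : V × Bool) (x : {x // Reach Γ x}) : {x // Reach Γ x} :=
  if h : ∃ y, x.1 = push Γ (linv l) y then ⟨h.choose, (x.2.pop Γ _ _ h.choose_spec).1⟩
  else ⟨push Γ l x.1, Reach.cons l x.1 x.2 (fun y hy => h ⟨y, hy⟩)⟩

theorem act_pop {l : V × Bool} {x : {x // Reach Γ x}} {y : V × V → List (V × Bool)}
    (h : x.1 = push Γ (linv l) y) : (act Γ l x).1 = y := by
  have h' : ∃ y, x.1 = push Γ (linv l) y := ⟨y, h⟩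
  rw [act, dif_pos h']
  exact push_inj Γ (h'.choose_spec.symm.trans h)

theorem act_push {l : V × Bool} {x : {x // Reach Γ x}} (h : ∀ y, x.1 ≠ push Γ (linv l) y) :
    (act Γ l x).1 = push Γ l x.1 := by
  rw [act, dif_neg (by push Not; exact h)]

theorem act_cases (l : V × Bool) (x : {x // Reach Γ x}) :
    (x.1 = push Γ (linv l) (act Γ l x).1) ∨
      ((act Γ l x).1 = push Γ l x.1 ∧ ∀ y, x.1 ≠ push Γ (linv l) y) := by
  by_cases h : ∃ y, x.1 = push Γ (linv l) y
  · left
    obtain ⟨y, hy⟩ := h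
    rw [act_pop Γ hy]; exact hy
  · right
    have h' : ∀ y, x.1 ≠ push Γ (linv l) y := fun y hy => h ⟨y, hy⟩
    exact ⟨act_push Γ h', h'⟩

theorem act_inv (l : V × Bool) (x : {x // Reach Γ x}) : act Γ (linv l) (act Γ l x) = x := by
  apply Subtype.ext
  rcases act_cases Γ l x with h | ⟨h, _⟩
  · have h2 := (x.2.pop Γ _ _ h).2
    rw [act_push Γ h2, ← h]
  · apply act_pop
    rw [linv_linv]; exact h

theorem act_comm_aux {l l' : V × Bool} (hadj : Γ.Adj l.1 l'.1) (x : {x // Reach Γ x})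
    {y : V × V → List (V × Bool)} (h : x.1 = push Γ (linv l) y)
    (h' : ∀ y, x.1 ≠ push Γ (linv l') y) :
    act Γ l (act Γ l' x) = act Γ l' (act Γ l x) := by
  apply Subtype.ext
  have hadj1 : Γ.Adj (linv l).1 l'.1 := hadj
  have hadj2 : Γ.Adj (linv l).1 (linv l').1 := hadj
  have e1 : (act Γ l' x).1 = push Γ (linv l) (push Γ l' y) := by
    rw [act_push Γ h', h, push_comm Γ hadj1]
  rw [act_pop Γ e1]
  have e2 := act_pop Γ h
  rw [act_push, e2]
  rw [e2]
  rintro z rfl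
  exact h' _ (h.trans (push_comm Γ hadj2 z))

theorem act_comm {l l' : V × Bool} (hadj : Γ.Adj l.1 l'.1) (x : {x // Reach Γ x}) :
    act Γ l (act Γ l' x) = act Γ l' (act Γ l x) := by
  by_cases h : ∃ y, x.1 = push Γ (linv l) y
  · obtain ⟨y, h⟩ := h
    by_cases h' : ∃ y, x.1 = push Γ (linv l') y
    · obtain ⟨z, h'⟩ := h'
      have hne : linv l ≠ linv l' := by
        intro e
        have : (linv l).1 = (linv l').1 := congrArg Prod.fst e
        exact hadj.ne this
      obtain ⟨_, w, hz, hy⟩ := push_diamond Γ hne (h.symm.trans h')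
      apply Subtype.ext
      rw [act_pop Γ (y := w), act_pop Γ (y := w)]
      · rw [act_pop Γ h, hy]
      · rw [act_pop Γ h', hz]
    · exact act_comm_aux Γ hadj x h (fun y hy => h' ⟨y, hy⟩)
  · have h1 : ∀ y, x.1 ≠ push Γ (linv l) y := fun y hy => h ⟨y, hy⟩
    by_cases h' : ∃ y, x.1 = push Γ (linv l') y
    · obtain ⟨z, h'⟩ := h'
      exact (act_comm_aux Γ hadj.symm x h' h1).symm
    · have h2 : ∀ y, x.1 ≠ push Γ (linv l') y := fun y hy => h' ⟨y, hy⟩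
      apply Subtype.ext
      have e1 := act_push Γ h1
      have e2 := act_push Γ h2
      have e3 : (act Γ l' (act Γ l x)).1 = push Γ l' (act Γ l x).1 := by
        apply act_push
        intro z hz
        rw [e1] at hz
        have hne : l ≠ linv l' := by
          rintro rfl
          exact hadj.ne rfl
        obtain ⟨_, w, _, hw⟩ := push_diamond Γ hne hz
        exact h2 w hw
      have e4 : (act Γ l (act Γ l' x)).1 = push Γ l (act Γ l' x).1 := by
        apply act_push
        intro z hz
        rw [e2] at hz
        have hne : l' ≠ linv l := by
          rintro rfl
          exact hadj.ne rfl
        obtain ⟨_, w, _, hw⟩ := push_diamond Γ hne hz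
        exact h1 w hw
      rw [e3, e4, e1, e2, push_comm Γ hadj]

noncomputable def actPerm (v : V) : Equiv.Perm {x // Reach Γ x} where
  toFun := act Γ (v, true)
  invFun := act Γ (v, false)
  left_inv := fun x => act_inv Γ (v, true) x
  right_inv := fun x => act_inv Γ (v, false) x

theorem actPerm_rels : ∀ r ∈ raagRels Γ, FreeGroup.lift (actPerm Γ) r = 1 := by
  rintro r ⟨u, v, h, rfl⟩
  simp only [map_mul, map_inv, FreeGroup.lift_apply_of]
  have : actPerm Γ u * actPerm Γ v = actPerm Γ v * actPerm Γ u := by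
    ext1 x
    exact act_comm Γ (l := (u, true)) (l' := (v, true)) h x
  rw [this]; group

noncomputable def actHom : RAAG Γ →* Equiv.Perm {x // Reach Γ x} :=
  PresentedGroup.toGroup (actPerm_rels Γ)

def lval (l : V × Bool) : RAAG Γ := if l.2 then raagGen Γ l.1 else (raagGen Γ l.1)⁻¹

theorem actHom_lval (l : V × Bool) (x : {x // Reach Γ x}) :
    actHom Γ (lval Γ l) x = act Γ l x := by
  have h : ∀ v, actHom Γ (raagGen Γ v) = actPerm Γ v := fun v => by
    simp [actHom, raagGen]
  obtain ⟨v, b⟩ := l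
  cases b
  · simp only [lval, map_inv, h, Bool.false_eq_true, if_false]; rfl
  · simp only [lval, h, if_true]; rfl

def stNil : {x // Reach Γ x} := ⟨_, Reach.nil⟩

noncomputable def st (ls : List (V × Bool)) : {x // Reach Γ x} := ls.foldr (act Γ) (stNil Γ)

theorem st_eq (ls : List (V × Bool)) : st Γ ls = actHom Γ (ls.map (lval Γ)).prod (stNil Γ) := by
  induction ls with
  | nil => simp [st]
  | cons l ls ih =>
    rw [List.map_cons, List.prod_cons, map_mul, Equiv.Perm.mul_apply, ← ih, actHom_lval]; rfl

/-- signs -/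
def sg (l : V × Bool) : ℤ := if l.2 then 1 else -1

def sgsum (t : List (V × Bool)) : ℤ := (t.map sg).sum

theorem sg_linv (l : V × Bool) : sg (linv l) = - sg l := by
  obtain ⟨v, b⟩ := l
  cases b <;> simp [sg, linv]

theorem abs_sgsum_le (t : List (V × Bool)) : |sgsum t| ≤ t.length := by
  induction t with
  | nil => simp [sgsum]
  | cons l t ih =>
    have h1 : sgsum (l :: t) = sg l + sgsum t := by simp [sgsum]
    have h2 : |sg l| = 1 := by
      obtain ⟨v, b⟩ := l
      cases b <;> simp [sg]
    rw [h1, List.length_cons]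
    push_cast
    have := abs_add_le (sg l) (sgsum t)
    linarith

def ht [Fintype V] (a : V → ℤ) (x : V × V → List (V × Bool)) : ℤ := ∑ w, a w * sgsum (x (w, w))

theorem ht_push [Fintype V] (a : V → ℤ) (l : V × Bool) (x : V × V → List (V × Bool)) :
    ht a (push Γ l x) = ht a x + sg l * a l.1 := by
  classical
  have : ∀ w, a w * sgsum (push Γ l x (w, w)) =
      a w * sgsum (x (w, w)) + if w = l.1 then sg l * a l.1 else 0 := by
    intro w
    by_cases h : w = l.1
    · rw [push_mem Γ ((mem_foot_diag Γ).2 h), if_pos h, h]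
      simp [sgsum]; ring
    · rw [push_nmem Γ (fun e => h ((mem_foot_diag Γ).1 e)), if_neg h, add_zero]
  unfold ht
  rw [Finset.sum_congr rfl (fun w _ => this w), Finset.sum_add_distrib]
  simp

theorem ht_act [Fintype V] (a : V → ℤ) (l : V × Bool) (x : {x // Reach Γ x}) :
    ht a (act Γ l x).1 = ht a x.1 + sg l * a l.1 := by
  rcases act_cases Γ l x with h | ⟨h, _⟩
  · have := ht_push Γ a (linv l) (act Γ l x).1
    rw [← h, sg_linv, linv_fst] at this
    rw [this]; ring
  · rw [h, ht_push]

theorem ht_st [Fintype V] (p : RAAG Γ →* Multiplicative ℤ) (ls : List (V × Bool)) :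
    ht (fun v => Multiplicative.toAdd (p (raagGen Γ v))) (st Γ ls).1 =
      Multiplicative.toAdd (p (ls.map (lval Γ)).prod) := by
  induction ls with
  | nil => simp [st, stNil, ht, sgsum]
  | cons l ls ih =>
    have : st Γ (l :: ls) = act Γ l (st Γ ls) := rfl
    rw [this, ht_act, ih, List.map_cons, List.prod_cons, map_mul, toAdd_mul]
    obtain ⟨v, b⟩ := l
    cases b <;> simp [lval, sg] <;> ring

def cnt (w : V) (x : V × V → List (V × Bool)) : ℕ := (x (w, w)).length

open Classical in
theorem Reach.count {x : V × V → List (V × Bool)} (hx : Reach Γ x) (u : V) (i : V × V)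
    (hi : i ∈ foot Γ u) : (x i).countP (fun l => l.1 = u) = cnt u x := by
  induction hx with
  | nil => simp [cnt]
  | cons l x hx _ ih =>
    unfold cnt at *
    by_cases h : l.1 = u
    · subst h
      rw [push_mem Γ hi, push_mem Γ ((mem_foot_diag Γ).2 rfl)]
      simp [ih]
    · rw [push_nmem Γ (fun e => h ((mem_foot_diag Γ).1 e).symm)]
      by_cases h' : i ∈ foot Γ l.1
      · rw [push_mem Γ h', List.countP_cons_of_neg (by simpa using h), ih]
      · rw [push_nmem Γ h', ih]

noncomputable def gs (c : ℕ → V × Bool) : ℕ → (V × V → List (V × Bool))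
  | 0 => fun _ => []
  | j + 1 => push Γ (c j) (gs c j)

def LChain (c : ℕ → V × Bool) : Prop :=
  ∀ j, ¬ Γ.Adj (c j).1 (c (j + 1)).1 ∧ (c j).1 ≠ (c (j + 1)).1

theorem gs_step {c : ℕ → V × Bool} (hc : LChain Γ c) (j : ℕ) (y : V × V → List (V × Bool)) :
    gs Γ c j ≠ push Γ (linv (c j)) y := by
  intro h
  cases j with
  | zero =>
    have := congrFun h ((c 0).1, (c 0).1)
    have e : push Γ (linv (c 0)) y ((c 0).1, (c 0).1) = linv (c 0) :: y ((c 0).1, (c 0).1) :=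
      push_mem Γ (show ((c 0).1, (c 0).1) ∈ foot Γ (linv (c 0)).1 from (mem_foot_diag Γ).2 rfl)
    rw [e] at this
    simp [gs] at this
  | succ j =>
    have := congrFun h ((c j).1, (c (j + 1)).1)
    have e : push Γ (linv (c (j + 1))) y ((c j).1, (c (j + 1)).1) =
        linv (c (j + 1)) :: y ((c j).1, (c (j + 1)).1) :=
      push_mem Γ (show ((c j).1, (c (j + 1)).1) ∈ foot Γ (linv (c (j + 1))).1 from
        mem_foot_right Γ (hc j).1)
    rw [e, gs, push_mem Γ (mem_foot_left Γ (hc j).1)] at this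
    have e2 : (c j).1 = (linv (c (j + 1))).1 := congrArg Prod.fst (List.cons.inj this).1
    exact (hc j).2 e2

theorem gs_reach {c : ℕ → V × Bool} (hc : LChain Γ c) (j : ℕ) : Reach Γ (gs Γ c j) := by
  induction j with
  | zero => exact Reach.nil
  | succ j ih => exact Reach.cons _ _ ih (gs_step Γ hc j)

theorem gs_st {c : ℕ → V × Bool} (hc : LChain Γ c) (j : ℕ) :
    (st Γ ((List.range j).map c).reverse).1 = gs Γ c j := by
  induction j with
  | zero => rfl
  | succ j ih =>
    rw [List.range_succ, List.map_append, List.reverse_append]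
    have : st Γ ((List.map c [j]).reverse ++ (List.map c (List.range j)).reverse) =
      act Γ (c j) (st Γ (List.map c (List.range j)).reverse) := rfl
    rw [this, act_push, ih]; · rfl
    rw [ih]; exact gs_step Γ hc j

def Ge (g x : V × V → List (V × Bool)) : Prop := ∀ i, g i <:+ x i

theorem ge_push (l : V × Bool) (x : V × V → List (V × Bool)) : Ge x (push Γ l x) := by
  intro i
  by_cases hi : i ∈ foot Γ l.1
  · rw [push_mem Γ hi]; exact List.suffix_cons _ _
  · rw [push_nmem Γ hi]

theorem Ge.trans {x y z : V × V → List (V × Bool)} (h : Ge x y) (h' : Ge y z) : Ge x z :=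
  fun i => (h i).trans (h' i)

theorem gs_mono (c : ℕ → V × Bool) {j k : ℕ} (h : j ≤ k) : Ge (gs Γ c j) (gs Γ c k) := by
  induction h with
  | refl => exact fun i => List.suffix_refl _
  | step _ ih => exact ih.trans (ge_push Γ _ _)

theorem gs_top {c : ℕ → V × Bool} (hc : LChain Γ c) (u : V) (j : ℕ)
    (hpos : 0 < cnt u (gs Γ c (j + 1))) (hu : u ≠ (c j).1) :
    ∃ k ∈ foot Γ u, ∀ l t, gs Γ c (j + 1) k = l :: t → l.1 ≠ u := by
  induction j with
  | zero =>
    exfalso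
    unfold cnt at hpos
    rw [gs, push_nmem Γ (fun e => hu ((mem_foot_diag Γ).1 e))] at hpos
    simp [gs] at hpos
  | succ j ih =>
    by_cases h : u = (c j).1
    · subst h
      refine ⟨_, mem_foot_left Γ (hc j).1, ?_⟩
      intro l t hl
      rw [gs, push_mem Γ (mem_foot_right Γ (hc j).1)] at hl
      rw [← (List.cons.inj hl).1]; exact hu.symm
    · have hpos' : 0 < cnt u (gs Γ c (j + 1)) := by
        unfold cnt at hpos ⊢
        rwa [gs, push_nmem Γ (fun e => hu ((mem_foot_diag Γ).1 e))] at hpos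
      obtain ⟨k, hk, hk'⟩ := ih hpos' h
      refine ⟨k, hk, ?_⟩
      intro l t hl
      rw [gs] at hl
      by_cases hf : k ∈ foot Γ (c (j + 1)).1
      · rw [push_mem Γ hf] at hl
        rw [← (List.cons.inj hl).1]; exact hu.symm
      · rw [push_nmem Γ hf] at hl
        exact hk' l t hl

theorem gs_key {c : ℕ → V × Bool} (hc : LChain Γ c) (j : ℕ) (l : V × Bool)
    {x' : V × V → List (V × Bool)} (hx : Reach Γ (push Γ l x'))
    (h1 : Ge (gs Γ c (j + 1)) (push Γ l x')) (h2 : ¬ Ge (gs Γ c (j + 1)) x') :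
    cnt (c j).1 (push Γ l x') = cnt (c j).1 (gs Γ c (j + 1)) := by
  classical
  have hg := gs_reach Γ hc (j + 1)
  unfold Ge at h2
  push Not at h2
  obtain ⟨i, hi⟩ := h2
  have hif : i ∈ foot Γ l.1 := by
    by_contra hn
    have := h1 i
    rw [push_nmem Γ hn] at this
    exact hi this
  have hi1 := h1 i
  rw [push_mem Γ hif, List.suffix_cons_iff] at hi1
  have hi2 : gs Γ c (j + 1) i = l :: x' i := hi1.resolve_right hi
  have hcnt : cnt l.1 (push Γ l x') = cnt l.1 (gs Γ c (j + 1)) := by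
    rw [← hx.count Γ l.1 i hif, ← hg.count Γ l.1 i hif, push_mem Γ hif, hi2]
  by_cases hu : l.1 = (c j).1
  · rw [← hu]; exact hcnt
  · exfalso
    have hpos : 0 < cnt l.1 (gs Γ c (j + 1)) := by
      rw [← hg.count Γ l.1 i hif, hi2]; simp
    obtain ⟨k, hk, hk'⟩ := gs_top Γ hc l.1 j hpos hu
    have hk1 := h1 k
    rw [push_mem Γ hk, List.suffix_cons_iff] at hk1
    rcases hk1 with hk1 | hk1
    · exact hk' _ _ hk1 rfl
    · have e1 := hx.count Γ l.1 k hk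
      have e2 := hg.count Γ l.1 k hk
      have e3 := hk1.sublist.countP_le (p := fun l' => decide (l'.1 = l.1))
      rw [push_mem Γ hk, List.countP_cons_of_pos (by simp)] at e1
      omega

end Piling
section Lower

variable {V : Type*} (Γ : SimpleGraph V)

theorem cnt_act_le (w : V) (l : V × Bool) (x : {x // Reach Γ x}) :
    cnt w x.1 ≤ cnt w (act Γ l x).1 + 1 := by
  unfold cnt
  rcases act_cases Γ l x with h | ⟨h, _⟩
  · rw [h]
    by_cases hi : (w, w) ∈ foot Γ (linv l).1
    · rw [push_mem Γ hi]; simp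
    · rw [push_nmem Γ hi]; simp
  · rw [h]
    have := (ge_push Γ l x.1 (w, w)).length_le
    omega

theorem cnt_push_le (w : V) (l : V × Bool) (x : V × V → List (V × Bool)) :
    cnt w (push Γ l x) ≤ cnt w x + 1 := by
  unfold cnt
  by_cases hi : (w, w) ∈ foot Γ l.1
  · rw [push_mem Γ hi]; simp
  · rw [push_nmem Γ hi]; simp

theorem cnt_gs_le (c : ℕ → V × Bool) (w : V) (j k : ℕ) :
    cnt w (gs Γ c (j + k)) ≤ cnt w (gs Γ c j) + k := by
  induction k with
  | zero => simp
  | succ k ih =>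
    have := cnt_push_le Γ w (c (j + k)) (gs Γ c (j + k))
    rw [← add_assoc, gs]; omega

theorem ht_gs_ge [Fintype V] (a : V → ℤ) (c : ℕ → V × Bool) (J : ℕ)
    (hsg : ∀ j < J, 1 ≤ sg (c j) * a (c j).1) (j : ℕ) (hj : j ≤ J) : (j : ℤ) ≤ ht a (gs Γ c j) := by
  induction j with
  | zero => simp [gs, ht, sgsum]
  | succ j ih =>
    rw [gs, ht_push]
    have := hsg j (by omega)
    have := ih (by omega)
    push_cast; linarith

theorem ht_diff [Fintype V] (a : V → ℤ) (g x : V × V → List (V × Bool)) (h : Ge g x) (E : ℤ)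
    (hE : ∀ w, (cnt w x : ℤ) ≤ cnt w g + E) :
    ht a g ≤ ht a x + (∑ w, |a w|) * E := by
  unfold ht
  rw [Finset.sum_mul, ← Finset.sum_add_distrib]
  refine Finset.sum_le_sum fun w _ => ?_
  obtain ⟨pre, hpre⟩ := h (w, w)
  have h1 := hE w
  unfold cnt at h1
  rw [← hpre] at h1 ⊢
  have h2 : sgsum (pre ++ g (w, w)) = sgsum pre + sgsum (g (w, w)) := by simp [sgsum]
  rw [h2]
  rw [List.length_append] at h1
  push_cast at h1
  have h3 := abs_sgsum_le pre
  have h4 : |a w| * |sgsum pre| ≤ |a w| * E :=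
    mul_le_mul_of_nonneg_left (by linarith) (abs_nonneg _)
  rw [← abs_mul] at h4
  have h5 := neg_abs_le (a w * sgsum pre)
  rw [mul_add]; linarith

theorem lower_main [Fintype V] (a : V → ℤ) (c : ℕ → V × Bool) (hc : LChain Γ c)
    (m n : ℕ) (hm : 0 < m) (hwin : ∀ j w, ∃ i < m, (c (j + i)).1 = w)
    (hsg : ∀ j < m * n, 1 ≤ sg (c j) * a (c j).1) (D : ℕ)
    (ls : List (V × Bool)) (hD : ∀ s, s <:+ ls → ht a (st Γ s).1 ≤ D)
    (hfin : (st Γ ls).1 = gs Γ c (2 * (m * n))) :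
    (n : ℤ) ^ 2 ≤ 2 * (∑ w, |a w|) * ls.length + 2 * (D + (∑ w, |a w|) * m) * n := by
  classical
  set M := ls.length with hM
  set W := ∑ w, |a w| with hW
  have hW0 : 0 ≤ W := Finset.sum_nonneg fun w _ => abs_nonneg _
  set N := 2 * (m * n) with hN
  set x : ℕ → {x // Reach Γ x} := fun t => st Γ (ls.drop (M - t)) with hx
  have hxD : ∀ t, ht a (x t).1 ≤ D := fun t => hD _ (List.drop_suffix _ _)
  have hx0 : (x 0).1 = fun _ => [] := by
    simp [hx, hM, st, stNil]
  have hxM : (x M).1 = gs Γ c N := by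
    simp only [hx, Nat.sub_self, List.drop_zero]; exact hfin
  have hxs : ∀ t < M, ∃ l, x (t + 1) = act Γ l (x t) := by
    intro t ht
    have h1 : M - (t + 1) < ls.length := by omega
    refine ⟨ls[M - (t + 1)], ?_⟩
    simp only [hx]
    rw [List.drop_eq_getElem_cons h1]
    have : M - (t + 1) + 1 = M - t := by omega
    rw [this]; rfl
  have hcnt : ∀ w t k, t + k ≤ M → cnt w (x t).1 ≤ cnt w (x (t + k)).1 + k := by
    intro w t k
    induction k with
    | zero => simp
    | succ k ih =>
      intro h
      obtain ⟨l, hl⟩ := hxs (t + k) (by omega)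
      have h1 := cnt_act_le Γ w l (x (t + k))
      have h2 := ih (by omega)
      have e : t + (k + 1) = t + k + 1 := by omega
      rw [e, hl]; omega
  have hT : ∀ j, j < N → ∃ τ, τ + 1 ≤ M ∧ (∀ t, τ + 1 ≤ t → t ≤ M → Ge (gs Γ c (j + 1)) (x t).1) ∧
      ¬ Ge (gs Γ c (j + 1)) (x τ).1 := by
    intro j hj
    have hQ : ∃ τ, ∀ t, τ ≤ t → t ≤ M → Ge (gs Γ c (j + 1)) (x t).1 := by
      refine ⟨M, fun t h1 h2 => ?_⟩
      have : t = M := by omega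
      rw [this, hxM]; exact gs_mono Γ c hj
    have h0 : ¬ Ge (gs Γ c (j + 1)) (x 0).1 := by
      intro h
      have := h ((c j).1, (c j).1)
      rw [hx0, gs, push_mem Γ ((mem_foot_diag Γ).2 rfl)] at this
      simp at this
    have hspec := Nat.find_spec hQ
    obtain ⟨τ, hτ⟩ : ∃ τ, Nat.find hQ = τ + 1 := by
      apply Nat.exists_eq_succ_of_ne_zero
      intro h
      rw [h] at hspec
      exact h0 (hspec 0 le_rfl (Nat.zero_le _))
    rw [hτ] at hspec
    have hmin := Nat.find_min hQ (m := τ) (by omega)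
    have hτM : τ + 1 ≤ M := by
      rw [← hτ]
      apply Nat.find_min'
      intro t h1 h2
      have : t = M := by omega
      rw [this, hxM]; exact gs_mono Γ c hj
    refine ⟨τ, hτM, hspec, ?_⟩
    intro hge
    apply hmin
    intro t h1 h2
    rcases Nat.eq_or_lt_of_le h1 with h | h
    · rw [← h]; exact hge
    · exact hspec t h h2
  choose! τ hτM hτge hτn using hT
  have hτmono : ∀ j k, j ≤ k → k < N → τ j ≤ τ k := by
    intro j k hjk hk
    by_contra hlt
    push Not at hlt
    have hj : j < N := by omega
    apply hτn j hj
    exact (gs_mono Γ c (by omega)).trans (hτge k hk (τ j) (by omega) (by have := hτM j hj; omega))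
  have hτcnt : ∀ j < N, cnt (c j).1 (x (τ j + 1)).1 = cnt (c j).1 (gs Γ c (j + 1)) := by
    intro j hj
    obtain ⟨l, hl⟩ := hxs (τ j) (hτM j hj)
    have h1 := hτge j hj (τ j + 1) le_rfl (hτM j hj)
    have h2 := hτn j hj
    rcases act_cases Γ l (x (τ j)) with h | ⟨h, _⟩
    · exfalso
      apply h2
      rw [h, ← hl]
      exact h1.trans (ge_push Γ _ _)
    · have h3 := (x (τ j + 1)).2
      rw [hl, h] at h1 h3 ⊢
      exact gs_key Γ hc j l h3 h1 h2
  -- main step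
  have hstep : ∀ j, j + 1 ≤ m * n → j + m < N →
      ((j : ℤ) + 1) ≤ D + W * m + W * ((τ (j + m) : ℤ) - τ j) := by
    intro j hj1 hj2
    have hjN : j < N := by omega
    have e1 := ht_gs_ge Γ a c (m * n) hsg (j + 1) hj1
    have e2 := hxD (τ j + 1)
    have e3 := ht_diff a (gs Γ c (j + 1)) (x (τ j + 1)).1 (hτge j hjN _ le_rfl (hτM j hjN))
      (m + ((τ (j + m) : ℤ) - τ j)) ?_
    · push_cast at e1
      rw [← hW, mul_add] at e3
      linarith
    · intro w
      obtain ⟨i, hi, hiw⟩ := hwin (j + 1) w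
      have f1 := hτcnt (j + 1 + i) (by omega)
      have f2 := hτmono j (j + 1 + i) (by omega) (by omega)
      have f3 := hτmono (j + 1 + i) (j + m) (by omega) hj2
      have f4 := cnt_gs_le Γ c w (j + 1) (i + 1)
      have f5 := hcnt w (τ j + 1) (τ (j + 1 + i) - τ j)
        (by have := hτM (j + 1 + i) (by omega); omega)
      have f6 : τ j + 1 + (τ (j + 1 + i) - τ j) = τ (j + 1 + i) + 1 := by omega
      rw [f6] at f5
      rw [hiw] at f1
      have f7 : j + 1 + (i + 1) = j + 1 + i + 1 := by omega
      rw [f7, ← f1] at f4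
      omega
  rcases Nat.eq_zero_or_pos n with hn0 | hn0
  · subst hn0
    have : 0 ≤ 2 * W * (M : ℤ) := by positivity
    push_cast
    nlinarith
  have hsum : ∀ k, k ≤ n → (k : ℤ) * (k + 1) ≤ 2 * (D + W * m) * k + 2 * W * τ (m * (k + 1) - 1) := by
    intro k
    induction k with
    | zero => intro _; simp; positivity
    | succ k ih =>
      intro hk
      have h1 := ih (by omega)
      have hmk : m * (k + 1) ≤ m * n := Nat.mul_le_mul_left _ hk
      have hmn : m * 1 ≤ m * n := Nat.mul_le_mul_left _ hn0
      have hmk1 : m * (k + 1 + 1) = m * (k + 1) + m := by ring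
      have hmk2 : 1 * (k + 1) ≤ m * (k + 1) := Nat.mul_le_mul_right _ hm
      have h2 := hstep (m * (k + 1) - 1) (by omega) (by omega)
      have h3 : m * (k + 1) - 1 + m = m * (k + 1 + 1) - 1 := by omega
      rw [h3] at h2
      have h4 : ((m * (k + 1) - 1 : ℕ) : ℤ) + 1 = m * (k + 1) := by
        rw [Nat.cast_sub (by omega)]; push_cast; ring
      rw [h4] at h2
      have h5 : ((k : ℤ) + 1) ≤ m * (k + 1) := by exact_mod_cast (by omega : k + 1 ≤ m * (k + 1))
      push_cast
      nlinarith
  have h1 := hsum n le_rfl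
  have hmn : m * 1 ≤ m * n := Nat.mul_le_mul_left _ hn0
  have hmn1 : m * (n + 1) = m * n + m := by ring
  have h3 := hτM (m * (n + 1) - 1) (by omega)
  have h4 : W * (τ (m * (n + 1) - 1) : ℤ) ≤ W * M :=
    mul_le_mul_of_nonneg_left (by exact_mod_cast (by omega : τ (m * (n + 1) - 1) ≤ M)) hW0
  have h5 : (0 : ℤ) ≤ n := Int.natCast_nonneg n
  nlinarith

end Lower
section Final

variable {V : Type*} (Γ : SimpleGraph V)

theorem compl_preconn (hjoin : ¬ IsJoin Γ) : Γᶜ.Preconnected := by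
  intro a b
  by_contra hab
  apply hjoin
  refine ⟨{w | Γᶜ.Reachable a w}, {w | ¬ Γᶜ.Reachable a w}, ⟨a, SimpleGraph.Reachable.refl a⟩,
    ⟨b, hab⟩, ?_, ?_, ?_⟩
  · rw [Set.disjoint_left]; intro x h1 h2; exact h2 h1
  · ext x; simp [em]
  · intro u hu v hv
    by_contra hadj
    apply hv
    by_cases huv : u = v
    · rw [← huv]; exact hu
    · have : Γᶜ.Adj u v := by rw [SimpleGraph.compl_adj]; exact ⟨huv, hadj⟩
      exact SimpleGraph.Reachable.trans hu this.reachable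

theorem exists_seq [Fintype V] (hcard : 2 ≤ Fintype.card V) (hjoin : ¬ IsJoin Γ) :
    ∃ (v : ℕ → V) (m : ℕ), 0 < m ∧ (∀ j, ¬ Γ.Adj (v j) (v (j + 1)) ∧ v j ≠ v (j + 1)) ∧
      (∀ j, v (j + m) = v j) ∧ ∀ j w, ∃ i < m, v (j + i) = w := by
  classical
  have hpre := compl_preconn Γ hjoin
  obtain ⟨v0, v1, h01⟩ := Fintype.one_lt_card_iff.1 (by omega : 1 < Fintype.card V)
  have hw : ∀ s : Finset V, ∃ q : Γᶜ.Walk v0 v0, ∀ w ∈ s, w ∈ q.support := by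
    intro s
    induction s using Finset.induction_on with
    | empty => exact ⟨SimpleGraph.Walk.nil, by simp⟩
    | insert x s _ ih =>
      obtain ⟨q, hq⟩ := ih
      obtain ⟨r⟩ := hpre v0 x
      refine ⟨q.append (r.append r.reverse), ?_⟩
      intro w hw
      rw [Finset.mem_insert] at hw
      rw [SimpleGraph.Walk.mem_support_append_iff, SimpleGraph.Walk.mem_support_append_iff]
      rcases hw with rfl | hw
      · right; left; exact r.end_mem_support
      · left; exact hq w hw
  obtain ⟨q, hq⟩ := hw Finset.univ
  have hm : 0 < q.length := by
    rw [Nat.pos_iff_ne_zero]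
    intro h
    obtain ⟨k, hk, hk2⟩ := SimpleGraph.Walk.mem_support_iff_exists_getVert.1 (hq v1 (Finset.mem_univ _))
    have : k = 0 := by omega
    rw [this, SimpleGraph.Walk.getVert_zero] at hk
    exact h01 hk
  refine ⟨fun j => q.getVert (j % q.length), q.length, hm, ?_, ?_, ?_⟩
  · intro j
    have hlt := Nat.mod_lt j hm
    have h1 := q.adj_getVert_succ hlt
    have h2 : q.getVert ((j + 1) % q.length) = q.getVert (j % q.length + 1) := by
      by_cases h : j % q.length + 1 = q.length
      · rw [h, SimpleGraph.Walk.getVert_length, Nat.add_mod]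
        rw [← Nat.add_mod, ← Nat.mod_add_mod, h, Nat.mod_self, SimpleGraph.Walk.getVert_zero]
      · rw [← Nat.mod_add_mod, Nat.mod_eq_of_lt (by omega)]
    rw [SimpleGraph.compl_adj] at h1
    simp only [h2]
    exact ⟨h1.2, h1.1⟩
  · intro j; simp
  · intro j w
    obtain ⟨k, hk, hk2⟩ := SimpleGraph.Walk.mem_support_iff_exists_getVert.1 (hq w (Finset.mem_univ _))
    have hk' : q.getVert (k % q.length) = w := by
      rcases Nat.eq_or_lt_of_le hk2 with h | h
      · rw [h, Nat.mod_self, SimpleGraph.Walk.getVert_zero, ← hk, h, SimpleGraph.Walk.getVert_length]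
      · rw [Nat.mod_eq_of_lt h, hk]
    refine ⟨(k + (q.length - j % q.length)) % q.length, Nat.mod_lt _ hm, ?_⟩
    have hlt := Nat.mod_lt j hm
    have : (j + (k + (q.length - j % q.length)) % q.length) % q.length = k % q.length := by
      rw [Nat.add_mod_mod, ← Nat.mod_add_mod]
      have : j % q.length + (k + (q.length - j % q.length)) = k + q.length := by omega
      rw [this, Nat.add_mod_right]
    simp only [this]; exact hk'

theorem raag_closure : Subgroup.closure (Set.range (raagGen Γ)) = ⊤ :=
  PresentedGroup.closure_range_of (raagRels Γ)

theorem raag_comm {u v : V} (h : Γ.Adj u v) : Commute (raagGen Γ u) (raagGen Γ v) := by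
  have h1 : (PresentedGroup.mk (raagRels Γ))
      (FreeGroup.of u * FreeGroup.of v * (FreeGroup.of u)⁻¹ * (FreeGroup.of v)⁻¹) = 1 :=
    PresentedGroup.one_of_mem ⟨u, v, h, rfl⟩
  rw [map_mul, map_mul, map_mul, map_inv, map_inv] at h1
  have h2 := mul_inv_eq_one.1 h1
  have h3 := mul_inv_eq_iff_eq_mul.1 h2
  exact h3

theorem Bd.letters {n : ℕ} {g : RAAG Γ} (h : Bd (Set.range (raagGen Γ)) n g) :
    ∃ ls : List (V × Bool), ls.length ≤ n ∧ (ls.map (lval Γ)).prod = g := by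
  obtain ⟨l, h1, h2, h3⟩ := h
  suffices H : ∃ ls : List (V × Bool), ls.length = l.length ∧ (ls.map (lval Γ)).prod = l.prod by
    obtain ⟨ls, e1, e2⟩ := H
    exact ⟨ls, by omega, e2.trans h3⟩
  clear h1 h3
  induction l with
  | nil => exact ⟨[], by simp⟩
  | cons x l ih =>
    obtain ⟨ls, e1, e2⟩ := ih fun y hy => h2 y (List.mem_cons_of_mem _ hy)
    rcases h2 x List.mem_cons_self with ⟨v, hv⟩ | ⟨v, hv⟩
    · exact ⟨(v, true) :: ls, by simp [e1], by simp [e2, lval, hv]⟩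
    · exact ⟨(v, false) :: ls, by simp [e1], by simp [e2, lval, hv]⟩

theorem bd_lval (ls : List (V × Bool)) :
    Bd (Set.range (raagGen Γ)) ls.length (ls.map (lval Γ)).prod := by
  refine ⟨ls.map (lval Γ), by simp, ?_, rfl⟩
  intro x hx
  obtain ⟨⟨v, b⟩, _, rfl⟩ := List.mem_map.1 hx
  cases b
  · right; exact ⟨v, by simp [lval]⟩
  · left; exact ⟨v, by simp [lval]⟩

theorem toAdd_lval (p : RAAG Γ →* Multiplicative ℤ) (l : V × Bool) :
    Multiplicative.toAdd (p (lval Γ l)) = sg l * Multiplicative.toAdd (p (raagGen Γ l.1)) := by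
  obtain ⟨v, b⟩ := l
  cases b <;> simp [lval, sg]

theorem p_le [Fintype V] (p : RAAG Γ →* Multiplicative ℤ) (ls : List (V × Bool)) :
    Multiplicative.toAdd (p (ls.map (lval Γ)).prod) ≤
      ls.length * ∑ w, |Multiplicative.toAdd (p (raagGen Γ w))| := by
  induction ls with
  | nil => simp
  | cons l ls ih =>
    rw [List.map_cons, List.prod_cons, map_mul, toAdd_mul, toAdd_lval, List.length_cons]
    have h1 : |Multiplicative.toAdd (p (raagGen Γ l.1))| ≤
        ∑ w, |Multiplicative.toAdd (p (raagGen Γ w))| :=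
      Finset.single_le_sum (f := fun w => |Multiplicative.toAdd (p (raagGen Γ w))|)
        (fun _ _ => abs_nonneg _) (Finset.mem_univ l.1)
    have h2 : sg l * Multiplicative.toAdd (p (raagGen Γ l.1)) ≤
        |Multiplicative.toAdd (p (raagGen Γ l.1))| := by
      obtain ⟨v, b⟩ := l
      cases b
      · simp [sg, neg_le_abs]
      · simp [sg, le_abs_self]
    push_cast
    linarith

theorem expand [Fintype V] (p : RAAG Γ →* Multiplicative ℤ) (T : Set (RAAG Γ))
    (hTk : T ⊆ (p.ker : Set (RAAG Γ))) (K : ℕ)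
    (hT : ∀ x ∈ T, Bd (Set.range (raagGen Γ)) K x) (l : List (RAAG Γ))
    (hl : ∀ x ∈ l, x ∈ T ∨ x⁻¹ ∈ T) :
    ∃ ls : List (V × Bool), ls.length ≤ K * l.length ∧ (ls.map (lval Γ)).prod = l.prod ∧
      p l.prod = 1 ∧
      ∀ s, s <:+ ls → Multiplicative.toAdd (p (s.map (lval Γ)).prod) ≤
        K * ∑ w, |Multiplicative.toAdd (p (raagGen Γ w))| := by
  have hW : 0 ≤ ∑ w, |Multiplicative.toAdd (p (raagGen Γ w))| :=
    Finset.sum_nonneg fun _ _ => abs_nonneg _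
  induction l with
  | nil =>
    refine ⟨[], by simp, by simp, by simp, ?_⟩
    intro s hs
    rw [List.suffix_nil.1 hs]
    simp only [List.map_nil, List.prod_nil, map_one, toAdd_one]
    positivity
  | cons x l ih =>
    obtain ⟨ls, e1, e2, e3, e4⟩ := ih fun y hy => hl y (List.mem_cons_of_mem _ hy)
    have hx : Bd (Set.range (raagGen Γ)) K x ∧ p x = 1 := by
      rcases hl x List.mem_cons_self with h | h
      · exact ⟨hT x h, hTk h⟩
      · refine ⟨by simpa using (hT _ h).inv, ?_⟩
        have : p x⁻¹ = 1 := hTk h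
        simpa using this
    obtain ⟨lx, f1, f2⟩ := hx.1.letters
    refine ⟨lx ++ ls, ?_, ?_, ?_, ?_⟩
    · rw [List.length_append, List.length_cons, Nat.mul_succ]; omega
    · rw [List.map_append, List.prod_append, f2, e2, List.prod_cons]
    · rw [List.prod_cons, map_mul, hx.2, e3, one_mul]
    · intro s hs
      obtain ⟨t, ht⟩ := hs
      rcases List.append_eq_append_iff.1 ht with ⟨r, h1, h2⟩ | ⟨r, h1, h2⟩
      · rw [h2, List.map_append, List.prod_append, map_mul, toAdd_mul, e2, e3, toAdd_one, add_zero]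
        refine (p_le Γ p r).trans ?_
        refine mul_le_mul_of_nonneg_right ?_ hW
        have : lx.length = t.length + r.length := by rw [h1, List.length_append]
        exact_mod_cast (by omega : r.length ≤ K)
      · exact e4 s ⟨r, h2.symm⟩

theorem ht_gs [Fintype V] (a : V → ℤ) (c : ℕ → V × Bool) (j : ℕ) :
    ht a (gs Γ c j) = ∑ i ∈ Finset.range j, sg (c i) * a (c i).1 := by
  induction j with
  | zero => simp [gs, ht, sgsum]
  | succ j ih => rw [gs, ht_push, ih, Finset.sum_range_succ]

theorem lower_exists [Fintype V] (hcard : 2 ≤ Fintype.card V) (hjoin : ¬ IsJoin Γ)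
    (p : RAAG Γ →* Multiplicative ℤ) (hp : ∀ v : V, p (raagGen Γ v) ≠ 1)
    (T : Set (RAAG Γ)) (hfin : T.Finite) (hTk : T ⊆ (p.ker : Set (RAAG Γ)))
    (hTc : Subgroup.closure T = p.ker) :
    ∃ A B C : ℕ, ∀ n, ∃ h ∈ p.ker, Bd (Set.range (raagGen Γ)) (B * n) h ∧
      n ^ 2 ≤ A * wordLength T h + C * n := by
  classical
  obtain ⟨v, m, hm, hv1, hv2, hv3⟩ := exists_seq Γ hcard hjoin
  obtain ⟨K, hK⟩ := exists_bd_unif (S := Set.range (raagGen Γ)) hfin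
    (fun x _ => exists_bd (by rw [raag_closure]; trivial))
  set a : V → ℤ := fun v => Multiplicative.toAdd (p (raagGen Γ v)) with ha
  have ha0 : ∀ v, a v ≠ 0 := fun v h => hp v (by
    apply Multiplicative.toAdd.injective; exact h)
  obtain ⟨W, hW⟩ : ∃ W : ℕ, (∑ w, |a w|) = W :=
    ⟨_, (Int.toNat_of_nonneg (Finset.sum_nonneg fun _ _ => abs_nonneg _)).symm⟩
  refine ⟨2 * W * K, 2 * m, 2 * (K * W + W * m), fun n => ?_⟩
  set c : ℕ → V × Bool := fun j =>
    (v j, if j < m * n then decide (0 < a (v j)) else !decide (0 < a (v j))) with hc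
  have hch : LChain Γ c := hv1
  have hper : ∀ k j, v (j + m * k) = v j := by
    intro k
    induction k with
    | zero => simp
    | succ k ih => intro j; rw [Nat.mul_succ, ← add_assoc, hv2, ih]
  have hpos : ∀ j < m * n, sg (c j) * a (c j).1 = |a (v j)| := by
    intro j hj
    simp only [hc, sg, if_pos hj]
    by_cases h : 0 < a (v j)
    · simp [h, abs_of_pos h]
    · simp [h, abs_of_nonpos (not_lt.1 h)]
  have hneg : ∀ j, ¬ j < m * n → sg (c j) * a (c j).1 = - |a (v j)| := by
    intro j hj
    simp only [hc, sg, if_neg hj]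
    by_cases h : 0 < a (v j)
    · simp [h, abs_of_pos h]
    · simp [h, abs_of_nonpos (not_lt.1 h)]
  set w := ((List.range (2 * (m * n))).map c).reverse with hw
  set h := (w.map (lval Γ)).prod with hh
  have hker : h ∈ p.ker := by
    rw [MonoidHom.mem_ker]
    apply Multiplicative.toAdd.injective
    have := ht_st Γ p w
    rw [gs_st Γ hch, ht_gs] at this
    rw [toAdd_one, ← this, two_mul, Finset.sum_range_add]
    rw [Finset.sum_congr rfl fun i hi => hpos i (Finset.mem_range.1 hi),
      Finset.sum_congr rfl fun i _ => hneg (m * n + i) (by omega), Finset.sum_neg_distrib]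
    have e : ∀ i, v (m * n + i) = v i := fun i => by rw [add_comm (m * n) i, hper n i]
    simp only [e]
    ring
  have hbd : Bd (Set.range (raagGen Γ)) (2 * m * n) h := by
    have := bd_lval Γ w
    have e : w.length = 2 * m * n := by simp [hw, mul_assoc]
    rw [e] at this; exact this
  refine ⟨h, hker, hbd, ?_⟩
  obtain ⟨k, hk⟩ := exists_bd (S := T) (g := h) (by rw [hTc]; exact hker)
  obtain ⟨l, hl1, hl2, hl3⟩ := hk.wordLength
  obtain ⟨ls, e1, e2, e3, e4⟩ := expand Γ p T hTk K hK l hl2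
  have key := lower_main Γ a c hch m n hm hv3 (by
      intro j hj
      rw [hpos j hj]
      exact Int.one_le_abs (ha0 _)) (K * W) ls (by
      intro s hs
      have := e4 s hs
      rw [← ht_st Γ p s] at this
      push_cast
      rw [← hW]
      exact this) (by
      rw [← gs_st Γ hch, st_eq Γ ls, e2, hl3, hh, ← st_eq Γ w])
  rw [hW] at key
  have key' : n ^ 2 ≤ 2 * W * ls.length + 2 * (K * W + W * m) * n := by exact_mod_cast key
  refine key'.trans (Nat.add_le_add_right ?_ _)
  calc 2 * W * ls.length ≤ 2 * W * (K * wordLength T h) :=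
        Nat.mul_le_mul_left _ (e1.trans (Nat.mul_le_mul_left _ hl1))
    _ = _ := by ring

end Final

theorem stmt5 {V : Type*} [Fintype V] (Γ : SimpleGraph V)
    (hconn : Γ.Connected) (hcard : 2 ≤ Fintype.card V) (hjoin : ¬ IsJoin Γ)
    (p : RAAG Γ →* Multiplicative ℤ)
    (hp : ∀ v : V, p (raagGen Γ v) ≠ 1) :
    Subgroup.FG p.ker ∧
    ∀ T : Set (RAAG Γ), T.Finite → T ⊆ (p.ker : Set (RAAG Γ)) →
      Subgroup.closure T = p.ker →
      FEquiv (distortion (Set.range (raagGen Γ)) T p.ker) (fun n => n ^ 2) := by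
  obtain ⟨F, hF1, hF2, C, hC⟩ := upper_aux Γ hconn (raagGen Γ) (raag_closure Γ)
    (fun u v h => raag_comm Γ h) p hp
  have hbd : ∀ g : RAAG Γ, ∃ n, Bd (Set.range (raagGen Γ)) n g := fun g =>
    exists_bd (by rw [raag_closure]; trivial)
  refine ⟨?_, ?_⟩
  · rw [Subgroup.fg_iff]
    refine ⟨F, le_antisymm ((Subgroup.closure_le _).2 hF2) ?_, hF1⟩
    intro h hh
    obtain ⟨n, hn⟩ := hbd h
    exact (hC h hh n hn).mem _ Subgroup.subset_closure
  · intro T hT1 hT2 hT3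
    obtain ⟨K, hK⟩ := exists_bd_unif (S := T) hF1
      (fun x hx => exists_bd (by rw [hT3]; exact hF2 hx))
    have hub : ∀ r, ∀ n ∈ {n | ∃ h ∈ p.ker, wordLength (Set.range (raagGen Γ)) h ≤ r ∧
        wordLength T h = n}, n ≤ K * (C * r * r) := by
      rintro r n ⟨h, h1, h2, rfl⟩
      obtain ⟨k, hk⟩ := hbd h
      exact (Bd.trans hK (hC h h1 r (hk.wordLength.mono h2))).wordLength_le
    refine ⟨⟨K * C + 1, 1, 1, 0, by omega, by omega, by omega, fun x _ => ?_⟩, ?_⟩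
    · have h1 : distortion (Set.range (raagGen Γ)) T p.ker x ≤ K * (C * x * x) := by
        refine csSup_le ?_ (hub x)
        exact ⟨_, 1, p.ker.one_mem, (Bd.one (n := 0)).wordLength_le.trans (Nat.zero_le _), rfl⟩
      refine h1.trans ?_
      simp only [one_mul]
      nlinarith [Nat.zero_le (x ^ 2), Nat.zero_le x]
    · obtain ⟨A, B, E, hABE⟩ := lower_exists Γ hcard hjoin p hp T hT1 hT2 hT3
      refine ⟨A + 1, B + 1, E + 1, 0, by omega, by omega, by omega, fun x _ => ?_⟩
      obtain ⟨h, h1, h2, h3⟩ := hABE x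
      have h4 : wordLength T h ≤ distortion (Set.range (raagGen Γ)) T p.ker ((B + 1) * x) := by
        refine le_csSup ⟨_, hub ((B + 1) * x)⟩ ⟨h, h1, ?_, rfl⟩
        exact h2.wordLength_le.trans (Nat.mul_le_mul_right _ (Nat.le_succ _))
      refine h3.trans ?_
      exact Nat.add_le_add (Nat.mul_le_mul (Nat.le_succ _) h4) (Nat.mul_le_mul_right _ (Nat.le_succ _))
end

section
/- Let Γ be a finite simplicial graph and let H_Φ be a generalized Bestvina–Brady subgroup of A_Γ. Then H_Φ is finitely generated if and only if each basis subgraph of Γ with respect to Φ is connected and dominating. -/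
section Aux

/-- Reachability by right multiplication by generators inside a region. -/
inductive BBReach {G V : Type*} [Group G] (s : V → G) (ok : G → Prop) : G → Prop
  | one : BBReach s ok 1
  | mul (p : G) (v : V) : BBReach s ok p → ok (p * s v) → BBReach s ok (p * s v)
  | inv (p : G) (v : V) : BBReach s ok p → ok (p * (s v)⁻¹) → BBReach s ok (p * (s v)⁻¹)

/-- coordinate -/
def bbCd {G : Type*} [Group G] {d : ℕ} (Φ : G →* (Fin d → Multiplicative ℤ)) (g : G)
    (j : Fin d) : ℤ := Multiplicative.toAdd (Φ g j)

variable {G V : Type*} [Group G] {d : ℕ} (Φ : G →* (Fin d → Multiplicative ℤ))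

theorem bbCd_mul (g h : G) (j : Fin d) : bbCd Φ (g * h) j = bbCd Φ g j + bbCd Φ h j := by
  simp [bbCd]

theorem bbCd_one (j : Fin d) : bbCd Φ 1 j = 0 := by
  simp [bbCd]

theorem bbCd_inv (g : G) (j : Fin d) : bbCd Φ g⁻¹ j = - bbCd Φ g j := by
  simp [bbCd]

theorem bbCd_zpow (g : G) (n : ℤ) (j : Fin d) : bbCd Φ (g ^ n) j = n * bbCd Φ g j := by
  simp [bbCd]

theorem bbCd_ker (g : G) : g ∈ Φ.ker ↔ ∀ j, bbCd Φ g j = 0 := by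
  rw [MonoidHom.mem_ker, funext_iff]
  simp [bbCd]

/-- region -/
def bbOk (T : Finset (Fin d)) (g : G) : Prop := ∀ j ∈ T, |bbCd Φ g j| ≤ 1

theorem bbReach_ok (s : V → G) (T : Finset (Fin d)) (g : G) (h : BBReach s (bbOk Φ T) g) :
    bbOk Φ T g := by
  cases h with
  | one => intro j _; simp [bbCd_one]
  | mul p v _ h => exact h
  | inv p v _ h => exact h

theorem bbReach_zpow (s : V → G) (lab : V → Fin d)
    (hs : ∀ v j, bbCd Φ (s v) j = if j = lab v then 1 else 0) (T : Finset (Fin d))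
    (i : Fin d) (q : G) (hq : BBReach s (bbOk Φ (insert i T)) q) (hqi : bbCd Φ q i = 0)
    (u v : V) (hu : lab u = i) (hv : lab v = i) (m : ℤ) :
    BBReach s (bbOk Φ (insert i T)) (q * (s u * (s v)⁻¹) ^ m) := by
  have hok := bbReach_ok Φ s _ q hq
  have hw : ∀ (m : ℤ) j, bbCd Φ (q * (s u * (s v)⁻¹) ^ m) j = bbCd Φ q j := by
    intro m j
    rw [bbCd_mul, bbCd_zpow, bbCd_mul, bbCd_inv, hs, hs, hu, hv]; ring
  have hok' : ∀ m : ℤ, bbOk Φ (insert i T) (q * (s u * (s v)⁻¹) ^ m) := by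
    intro m j hj
    rw [hw]; exact hok j hj
  have hstep : ∀ (m : ℤ) (x : V), lab x = i →
      bbOk Φ (insert i T) (q * (s u * (s v)⁻¹) ^ m * s x) := by
    intro m x hx j hj
    rw [bbCd_mul, hw, hs, hx]
    by_cases h : j = i
    · subst h; simp [hqi]
    · simpa [h] using hok j hj
  induction m using Int.induction_on with
  | zero => simpa using hq
  | succ m ih =>
    have e : q * (s u * (s v)⁻¹) ^ ((m : ℤ) + 1) = q * (s u * (s v)⁻¹) ^ (m : ℤ) * s u * (s v)⁻¹ := by
      rw [zpow_add_one]; group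
    have h2 := hok' (m + 1)
    rw [e] at h2 ⊢
    exact .inv _ _ (.mul _ _ ih (hstep _ _ hu)) h2
  | pred m ih =>
    have e : q * (s u * (s v)⁻¹) ^ (-(m : ℤ) - 1)
        = q * (s u * (s v)⁻¹) ^ (-(m : ℤ)) * s v * (s u)⁻¹ := by
      rw [zpow_sub_one]; group
    have h2 := hok' (-m - 1)
    rw [e] at h2 ⊢
    exact .inv _ _ (.mul _ _ ih (hstep _ _ hv)) h2

theorem bbReach_insert (Γ : SimpleGraph V) (s : V → G) (lab : V → Fin d)
    (hs : ∀ v j, bbCd Φ (s v) j = if j = lab v then 1 else 0)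
    (hcomm : ∀ u v, Γ.Adj u v → Commute (s u) (s v))
    (T : Finset (Fin d)) (i : Fin d)
    (hc : (Γ.induce {v : V | lab v = i}).Connected)
    (hd : ∀ v : V, lab v ≠ i → ∃ u : V, lab u = i ∧ Γ.Adj v u)
    (p : G) (hp : BBReach s (bbOk Φ T) p) (u : V) (hu : lab u = i) :
    BBReach s (bbOk Φ (insert i T)) (p * s u ^ (- bbCd Φ p i)) := by
  have hci : ∀ (p : G) (u : V), lab u = i → bbCd Φ (p * s u ^ (- bbCd Φ p i)) i = 0 := by
    intro p u hu
    rw [bbCd_mul, bbCd_zpow, hs]; simp [hu]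
  have hcj : ∀ (p : G) (u : V) (c : ℤ) j, lab u = i → j ≠ i →
      bbCd Φ (p * s u ^ c) j = bbCd Φ p j := by
    intro p u c j hu hj
    rw [bbCd_mul, bbCd_zpow, hs]; simp [hu, hj]
  -- change of `u`
  have change : ∀ (p : G) (u v : V), lab u = i → lab v = i →
      BBReach s (bbOk Φ (insert i T)) (p * s u ^ (- bbCd Φ p i)) →
      BBReach s (bbOk Φ (insert i T)) (p * s v ^ (- bbCd Φ p i)) := by
    intro p u v hu hv h
    have hr := hc.preconnected ⟨u, hu⟩ ⟨v, hv⟩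
    rw [SimpleGraph.reachable_iff_reflTransGen] at hr
    have : ∀ x : {v : V | lab v = i}, Relation.ReflTransGen
        (Γ.induce {v : V | lab v = i}).Adj ⟨u, hu⟩ x →
        BBReach s (bbOk Φ (insert i T)) (p * s x ^ (- bbCd Φ p i)) := by
      intro x hx
      induction hx with
      | refl => exact h
      | @tail b c _ hbc ih =>
        have hcm : Commute (s b) (s c) := hcomm _ _ hbc
        have := bbReach_zpow Φ s lab hs T i _ ih (hci p b b.2) b c b.2 c.2 (bbCd Φ p i)
        rw [(hcm.inv_right).mul_zpow] at this
        have e : p * s b ^ (-bbCd Φ p i) * (s b ^ bbCd Φ p i * (s c)⁻¹ ^ bbCd Φ p i)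
          = p * s c ^ (-bbCd Φ p i) := by
          rw [inv_zpow, zpow_neg, zpow_neg]; group
        rwa [e] at this
    exact this _ hr
  -- the step for letters of a different label
  have okk : ∀ (q : G) (w : V), lab w = i → bbOk Φ T q →
      bbOk Φ (insert i T) (q * s w ^ (- bbCd Φ q i)) := by
    intro q w hw hq j hj
    by_cases h : j = i
    · subst h; rw [hci q w hw]; simp
    · rw [hcj q w _ j hw h]
      exact hq j (by simpa [h] using hj)
  induction hp generalizing u with
  | one => simpa [bbCd_one] using BBReach.one
  | mul p v hp hok ih =>
    by_cases hv : lab v = i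
    · refine change _ v u hv hu ?_
      have e : p * s v * s v ^ (-bbCd Φ (p * s v) i) = p * s v ^ (- bbCd Φ p i) := by
        rw [bbCd_mul, hs, mul_assoc, ← zpow_one_add]; simp [hv]
      rw [e]; exact ih v hv
    · obtain ⟨w, hw, hvw⟩ := hd v hv
      refine change _ w u hw hu ?_
      have h2 := okk _ w hw hok
      have e0 : bbCd Φ (p * s v) i = bbCd Φ p i := by
        rw [bbCd_mul, hs]; simp [Ne.symm hv]
      have e : p * s v * s w ^ (-bbCd Φ (p * s v) i) = p * s w ^ (- bbCd Φ p i) * s v := by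
        rw [e0, mul_assoc, mul_assoc, ((hcomm _ _ hvw).zpow_right _).eq]
      rw [e] at h2 ⊢
      exact .mul _ _ (ih w hw) h2
  | inv p v hp hok ih =>
    by_cases hv : lab v = i
    · refine change _ v u hv hu ?_
      have e : p * (s v)⁻¹ * s v ^ (-bbCd Φ (p * (s v)⁻¹) i) = p * s v ^ (- bbCd Φ p i) := by
        rw [bbCd_mul, bbCd_inv, hs, mul_assoc, ← zpow_neg_one, ← zpow_add]; simp [hv]
      rw [e]; exact ih v hv
    · obtain ⟨w, hw, hvw⟩ := hd v hv
      refine change _ w u hw hu ?_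
      have h2 := okk _ w hw hok
      have e0 : bbCd Φ (p * (s v)⁻¹) i = bbCd Φ p i := by
        rw [bbCd_mul, bbCd_inv, hs]; simp [Ne.symm hv]
      have e : p * (s v)⁻¹ * s w ^ (-bbCd Φ (p * (s v)⁻¹) i)
          = p * s w ^ (- bbCd Φ p i) * (s v)⁻¹ := by
        rw [e0, mul_assoc, mul_assoc, (((hcomm _ _ hvw).inv_left).zpow_right _).eq]
      rw [e] at h2 ⊢
      exact .inv _ _ (ih w hw) h2

theorem bbReach_all (Γ : SimpleGraph V) (s : V → G) (lab : V → Fin d)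
    (hs : ∀ v j, bbCd Φ (s v) j = if j = lab v then 1 else 0)
    (hcomm : ∀ u v, Γ.Adj u v → Commute (s u) (s v))
    (hgen : Subgroup.closure (Set.range s) = ⊤)
    (H : ∀ i : Fin d,
        (Γ.induce {v : V | lab v = i}).Connected ∧
        ∀ v : V, lab v ≠ i → ∃ u : V, lab u = i ∧ Γ.Adj v u)
    (T : Finset (Fin d)) : ∀ g : G, (∀ j ∈ T, bbCd Φ g j = 0) → BBReach s (bbOk Φ T) g := by
  induction T using Finset.induction_on with
  | empty =>
    intro g _
    have hg : g ∈ Subgroup.closure (Set.range s) := by rw [hgen]; trivial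
    induction hg using Subgroup.closure_induction_right with
    | one => exact .one
    | mul_right x y hx hy ih =>
      obtain ⟨v, rfl⟩ := hy
      exact .mul _ _ (ih (by simp)) (by intro j hj; simp at hj)
    | mul_inv_cancel x y hx hy ih =>
      obtain ⟨v, rfl⟩ := hy
      exact .inv _ _ (ih (by simp)) (by intro j hj; simp at hj)
  | insert i T hi ih =>
    intro g hg
    have h1 := ih g (fun j hj => hg j (Finset.mem_insert_of_mem hj))
    obtain ⟨⟨u, hu⟩⟩ := (H i).1.nonempty
    have := bbReach_insert Φ Γ s lab hs hcomm T i (H i).1 (H i).2 g h1 u hu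
    rw [hg i (Finset.mem_insert_self _ _)] at this
    simpa using this

theorem bb_fg [Finite V] (s : V → G)
    (H : ∀ g ∈ Φ.ker, BBReach s (bbOk Φ Finset.univ) g) : Subgroup.FG Φ.ker := by
  classical
  let B : Set (Fin d → Multiplicative ℤ) :=
    Set.pi Set.univ (fun _ => Multiplicative.toAdd ⁻¹' (Set.Icc (-1 : ℤ) 1))
  have hB : B.Finite := Set.Finite.pi' (fun _ =>
    (Set.finite_Icc (-1 : ℤ) 1).preimage (Multiplicative.toAdd.injective.injOn)) |>.subset (by
      intro x hx j; exact hx j trivial)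
  have hokB : ∀ g, bbOk Φ Finset.univ g → Φ g ∈ B := by
    intro g hg j _
    exact abs_le.mp (hg j (Finset.mem_univ j))
  let σ : (Fin d → Multiplicative ℤ) → G := Function.invFun Φ
  have hσ : ∀ g, Φ (σ (Φ g)) = Φ g := fun g => Function.invFun_eq ⟨g, rfl⟩
  let S1 : Set G := (fun t : (Fin d → Multiplicative ℤ) × (Fin d → Multiplicative ℤ) × V =>
      σ t.1 * s t.2.2 * (σ t.2.1)⁻¹) '' (B ×ˢ B ×ˢ Set.univ)
  let S2 : Set G := (fun t : (Fin d → Multiplicative ℤ) × (Fin d → Multiplicative ℤ) × V =>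
      σ t.1 * (s t.2.2)⁻¹ * (σ t.2.1)⁻¹) '' (B ×ˢ B ×ˢ Set.univ)
  have hfin : ({σ 1} ∪ S1 ∪ S2 : Set G).Finite :=
    ((Set.finite_singleton _).union ((hB.prod (hB.prod Set.finite_univ)).image _)).union
      ((hB.prod (hB.prod Set.finite_univ)).image _)
  let S : Set G := ({σ 1} ∪ S1 ∪ S2) ∩ Φ.ker
  have hS : S.Finite := hfin.subset Set.inter_subset_left
  have hσ1 : σ 1 ∈ S := by
    refine ⟨Or.inl (Or.inl rfl), ?_⟩
    have := hσ 1
    simpa [MonoidHom.mem_ker] using this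
  have key : ∀ p, BBReach s (bbOk Φ Finset.univ) p →
      p * (σ (Φ p))⁻¹ ∈ Subgroup.closure S := by
    intro p hp
    induction hp with
    | one =>
      rw [one_mul, map_one]
      exact inv_mem (Subgroup.subset_closure hσ1)
    | mul p v hp hok ih =>
      have e : p * s v * (σ (Φ (p * s v)))⁻¹
        = p * (σ (Φ p))⁻¹ * (σ (Φ p) * s v * (σ (Φ (p * s v)))⁻¹) := by group
      rw [e]
      refine mul_mem ih (Subgroup.subset_closure ⟨Or.inl (Or.inr ?_), ?_⟩)
      · exact ⟨(Φ p, Φ (p * s v), v),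
          ⟨hokB _ (bbReach_ok Φ s _ _ hp), hokB _ hok, trivial⟩, rfl⟩
      · simp only [SetLike.mem_coe, MonoidHom.mem_ker]
        rw [map_mul, map_mul, map_inv, hσ, hσ, map_mul]; simp
    | inv p v hp hok ih =>
      have e : p * (s v)⁻¹ * (σ (Φ (p * (s v)⁻¹)))⁻¹
        = p * (σ (Φ p))⁻¹ * (σ (Φ p) * (s v)⁻¹ * (σ (Φ (p * (s v)⁻¹)))⁻¹) := by group
      rw [e]
      refine mul_mem ih (Subgroup.subset_closure ⟨Or.inr ?_, ?_⟩)
      · exact ⟨(Φ p, Φ (p * (s v)⁻¹), v),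
          ⟨hokB _ (bbReach_ok Φ s _ _ hp), hokB _ hok, trivial⟩, rfl⟩
      · simp only [SetLike.mem_coe, MonoidHom.mem_ker]
        rw [map_mul, map_mul, map_inv Φ (σ _), hσ, hσ, map_mul]; simp
  rw [Subgroup.fg_iff]
  refine ⟨S, le_antisymm ?_ ?_, hS⟩
  · rw [Subgroup.closure_le]; exact Set.inter_subset_right
  · intro g hg
    have h1 := key g (H g hg)
    rw [MonoidHom.mem_ker.mp hg] at h1
    have := mul_mem h1 (Subgroup.subset_closure hσ1)
    simpa using this

/-- doubling -/
def bbDbl : Equiv.Perm ℚ := Equiv.mulLeft₀ 2 two_ne_zero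

/-- adding one -/
def bbAdd : Equiv.Perm ℚ := Equiv.addLeft 1

theorem bbDbl_apply (q : ℚ) : bbDbl q = 2 * q := rfl
theorem bbAdd_apply (q : ℚ) : bbAdd q = 1 + q := rfl

theorem bbDbl_zpow (n : ℤ) (q : ℚ) : (bbDbl ^ n) q = 2 ^ n * q := by
  have h1 : ∀ (q : ℚ), bbDbl⁻¹ q = 2⁻¹ * q := by
    intro q
    rw [Equiv.Perm.inv_eq_iff_eq, bbDbl_apply]; ring
  induction n using Int.induction_on generalizing q with
  | zero => simp
  | succ m ih =>
    rw [zpow_add_one, Equiv.Perm.mul_apply, ih, bbDbl_apply, zpow_add_one₀ two_ne_zero]; ring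
  | pred m ih =>
    rw [zpow_sub_one, Equiv.Perm.mul_apply, ih, h1, zpow_sub_one₀ two_ne_zero]; ring

theorem bb_not_fg (s : V → G) (hgen : Subgroup.closure (Set.range s) = ⊤) (i : Fin d)
    (f : G →* Equiv.Perm ℚ)
    (hf : ∀ v, ∃ c : ℚ, ∀ q, f (s v) q = 2 ^ (bbCd Φ (s v) i) * q + c)
    (a w : G) (ha : f a = bbDbl) (hw : f w = bbAdd) : ¬ Subgroup.FG Φ.ker := by
  have haff : ∀ g : G, ∃ c : ℚ, ∀ q, f g q = 2 ^ (bbCd Φ g i) * q + c := by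
    intro g
    have hg : g ∈ Subgroup.closure (Set.range s) := by rw [hgen]; trivial
    induction hg using Subgroup.closure_induction with
    | mem x hx => obtain ⟨v, rfl⟩ := hx; exact hf v
    | one => exact ⟨0, by simp [bbCd_one]⟩
    | mul x y _ _ hx hy =>
      obtain ⟨c, hc⟩ := hx
      obtain ⟨e, he⟩ := hy
      refine ⟨2 ^ (bbCd Φ x i) * e + c, fun q => ?_⟩
      rw [map_mul, Equiv.Perm.mul_apply, he, hc, bbCd_mul, zpow_add₀ two_ne_zero]; ring
    | inv x _ hx =>
      obtain ⟨c, hc⟩ := hx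
      refine ⟨- (2 ^ (- bbCd Φ x i) * c), fun q => ?_⟩
      rw [map_inv, Equiv.Perm.inv_eq_iff_eq, hc, bbCd_inv, zpow_neg]
      have : (2 : ℚ) ^ (bbCd Φ x i) ≠ 0 := zpow_ne_zero _ two_ne_zero
      field_simp
      ring
  have htr : ∀ g ∈ Φ.ker, ∀ q, f g q = q + f g 0 := by
    intro g hg q
    obtain ⟨c, hc⟩ := haff g
    rw [hc, hc, (bbCd_ker Φ g).1 hg i]; simp
  intro hfg
  obtain ⟨S, hS, hSf⟩ := (Subgroup.fg_iff _).1 hfg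
  obtain ⟨D, hD0, hD⟩ : ∃ D : ℕ, 0 < D ∧ ∀ g ∈ S, ∃ z : ℤ, (D : ℚ) * f g 0 = z := by
    refine ⟨∏ g ∈ hSf.toFinset, (f g 0).den, Finset.prod_pos fun g _ => (f g 0).den_pos, ?_⟩
    intro g hg
    obtain ⟨k, hk⟩ := Finset.dvd_prod_of_mem (fun g => (f g 0).den) (hSf.mem_toFinset.2 hg)
    refine ⟨k * (f g 0).num, ?_⟩
    rw [hk]
    push_cast
    have := Rat.mul_den_eq_num (f g 0)
    linear_combination (k : ℚ) * this
  have hall : ∀ g ∈ Φ.ker, ∃ z : ℤ, (D : ℚ) * f g 0 = z := by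
    have hle : Subgroup.closure S ≤ Φ.ker := hS.le
    intro g hg
    rw [← hS] at hg
    induction hg using Subgroup.closure_induction with
    | mem x hx => exact hD x hx
    | one => exact ⟨0, by simp⟩
    | mul x y hx hy ihx ihy =>
      obtain ⟨c, hc⟩ := ihx
      obtain ⟨e, he⟩ := ihy
      refine ⟨c + e, ?_⟩
      rw [map_mul, Equiv.Perm.mul_apply, htr x (hle hx)]
      push_cast
      linear_combination hc + he
    | inv x hx ih =>
      obtain ⟨c, hc⟩ := ih
      refine ⟨-c, ?_⟩
      have : f x⁻¹ 0 = - f x 0 := by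
        rw [map_inv, Equiv.Perm.inv_eq_iff_eq, htr x (hle hx)]; ring
      rw [this]; push_cast; linear_combination -hc
  have hn : w * a ^ (-(D : ℤ)) * w⁻¹ * a ^ (D : ℤ) ∈ Φ.ker := by
    rw [bbCd_ker]
    intro j
    simp only [bbCd_mul, bbCd_inv, bbCd_zpow]; ring
  obtain ⟨z, hz⟩ := hall _ hn
  have hadd : ∀ q : ℚ, bbAdd⁻¹ q = q - 1 := by
    intro q; rw [Equiv.Perm.inv_eq_iff_eq, bbAdd_apply]; ring
  have hval : f (w * a ^ (-(D : ℤ)) * w⁻¹ * a ^ (D : ℤ)) 0 = 1 - (2 ^ D)⁻¹ := by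
    simp only [map_mul, map_inv, map_zpow, ha, hw, Equiv.Perm.mul_apply, bbDbl_zpow, hadd,
      bbAdd_apply]
    rw [zpow_neg, zpow_natCast]; ring
  rw [hval] at hz
  have hlt : D < 2 ^ D := Nat.lt_two_pow_self
  have hz2 : (D : ℚ) = ((D : ℤ) - z : ℤ) * 2 ^ D := by
    push_cast
    have : (2 : ℚ) ^ D ≠ 0 := by positivity
    rw [← hz]; field_simp; ring
  have hz3 : (D : ℤ) = ((D : ℤ) - z) * 2 ^ D := by exact_mod_cast hz2
  have hdvd : (2 ^ D : ℕ) ∣ D := by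
    have : ((2 ^ D : ℕ) : ℤ) ∣ (D : ℤ) := ⟨D - z, by push_cast; linarith⟩
    exact_mod_cast this
  exact absurd (Nat.le_of_dvd hD0 hdvd) (by omega)

end Aux

theorem raagGen_closure {V : Type*} (Γ : SimpleGraph V) :
    Subgroup.closure (Set.range (raagGen Γ)) = ⊤ :=
  PresentedGroup.closure_range_of _

theorem raagGen_comm {V : Type*} (Γ : SimpleGraph V) (u v : V) (h : Γ.Adj u v) :
    Commute (raagGen Γ u) (raagGen Γ v) := by
  have : (PresentedGroup.mk (raagRels Γ)) (FreeGroup.of u * FreeGroup.of v *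
      (FreeGroup.of u)⁻¹ * (FreeGroup.of v)⁻¹) = 1 :=
    PresentedGroup.one_of_mem ⟨u, v, h, rfl⟩
  simp only [map_mul, map_inv] at this
  have h2 := mul_inv_eq_one.1 this
  exact mul_inv_eq_iff_eq_mul.1 h2

theorem raag_lift {V H : Type*} [Group H] (Γ : SimpleGraph V) (F : V → H)
    (hF : ∀ u v, Γ.Adj u v → Commute (F u) (F v)) :
    ∃ f : RAAG Γ →* H, ∀ v, f (raagGen Γ v) = F v := by
  refine ⟨PresentedGroup.toGroup (f := F) ?_, fun v => PresentedGroup.toGroup.of _⟩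
  rintro r ⟨u, v, h, rfl⟩
  simp only [map_mul, map_inv, FreeGroup.lift_apply_of]
  rw [(hF u v h).eq]; group

/-- A generalized Bestvina–Brady subgroup `H_Φ = ker Φ` is finitely generated iff
every basis subgraph `Γᵢ` is connected and dominating. Here the vertices of `Γ` are
labeled by `lab : V → Fin d` (surjectively), `Φ : A_Γ → ℤ^d` sends a vertex with
label `i` to the basis vector `e_i`, and `Γᵢ` is the induced subgraph on the
vertices with label `i`. -/
theorem stmt14 {V : Type*} [Fintype V] (Γ : SimpleGraph V) (d : ℕ)
    (lab : V → Fin d) (hlab : Function.Surjective lab)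
    (Φ : RAAG Γ →* (Fin d → Multiplicative ℤ))
    (hΦ : ∀ v : V, Φ (raagGen Γ v) = Pi.mulSingle (lab v) (Multiplicative.ofAdd 1)) :
    Subgroup.FG Φ.ker ↔
      ∀ i : Fin d,
        (Γ.induce {v : V | lab v = i}).Connected ∧
        ∀ v : V, lab v ≠ i → ∃ u : V, lab u = i ∧ Γ.Adj v u := by
  classical
  have hs : ∀ v j, bbCd Φ (raagGen Γ v) j = if j = lab v then 1 else 0 := by
    intro v j
    unfold bbCd
    rw [hΦ, Pi.mulSingle_apply]
    split_ifs <;> rfl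
  constructor
  · intro hfg i
    obtain ⟨a, ha⟩ := hlab i
    constructor
    · by_contra hcon
      have hne : Nonempty {v : V | lab v = i} := ⟨⟨a, ha⟩⟩
      have hpre : ¬ (Γ.induce {v : V | lab v = i}).Preconnected := fun h => hcon ⟨h⟩
      unfold SimpleGraph.Preconnected at hpre
      push Not at hpre
      obtain ⟨⟨a, ha⟩, ⟨b, hb⟩, hab⟩ := hpre
      have ha' : lab a = i := ha
      have hb' : lab b = i := hb
      let A : V → Prop := fun u => ∃ h : lab u = i,
        (Γ.induce {v : V | lab v = i}).Reachable ⟨a, ha⟩ ⟨u, h⟩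
      have hAadj : ∀ u v, Γ.Adj u v → lab v = i → A u → A v := by
        rintro u v huv hv ⟨hu, hr⟩
        exact ⟨hv, hr.trans (SimpleGraph.Adj.reachable (by simpa using huv))⟩
      let F : V → Equiv.Perm ℚ := fun u =>
        if lab u = i then (if A u then bbDbl else bbAdd * bbDbl) else 1
      have hF : ∀ u v, Γ.Adj u v → Commute (F u) (F v) := by
        intro u v huv
        by_cases hu : lab u = i
        · by_cases hv : lab v = i
          · have : A u ↔ A v := ⟨hAadj u v huv hv, hAadj v u huv.symm hu⟩
            have : F u = F v := by simp only [F, hu, hv, this]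
            rw [this]
          · simp [F, hv]
        · simp [F, hu]
      obtain ⟨f, hf⟩ := raag_lift Γ F hF
      refine bb_not_fg Φ (raagGen Γ) (raagGen_closure Γ) i f ?_ (raagGen Γ a)
        (raagGen Γ b * (raagGen Γ a)⁻¹) ?_ ?_ hfg
      · intro v
        rw [hf, hs]
        by_cases hv : lab v = i
        · by_cases hA : A v
          · exact ⟨0, fun q => by simp [F, hv, hA, bbDbl_apply]⟩
          · exact ⟨1, fun q => by simp [F, hv, hA, bbDbl_apply, bbAdd_apply, add_comm]⟩
        · exact ⟨0, fun q => by simp [F, hv, Ne.symm hv]⟩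
      · have : A a := ⟨ha, .refl _⟩
        rw [hf]; simp [F, ha', this]
      · have h1 : A a := ⟨ha, .refl _⟩
        have h2 : ¬ A b := fun ⟨_, h⟩ => hab h
        rw [map_mul, map_inv, hf, hf]; simp [F, ha', hb', h1, h2]
    · intro v hv
      by_contra hcon
      push Not at hcon
      let F : V → Equiv.Perm ℚ := fun u =>
        if lab u = i then bbDbl else if u = v then bbAdd else 1
      have hF : ∀ u v, Γ.Adj u v → Commute (F u) (F v) := by
        intro u w huw
        by_cases hu : lab u = i
        · by_cases hw : lab w = i
          · have : F u = F w := by simp [F, hu, hw]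
            rw [this]
          · have : w ≠ v := by
              rintro rfl; exact hcon u hu huw.symm
            simp [F, hw, this]
        · by_cases hw : lab w = i
          · have : u ≠ v := by
              rintro rfl; exact hcon w hw huw
            simp [F, hu, this]
          · by_cases h1 : u = v
            · by_cases h2 : w = v
              · rw [h1, h2]
              · simp [F, hw, h2]
            · simp [F, hu, h1]
      obtain ⟨f, hf⟩ := raag_lift Γ F hF
      refine bb_not_fg Φ (raagGen Γ) (raagGen_closure Γ) i f ?_ (raagGen Γ a)
        (raagGen Γ v) ?_ ?_ hfg
      · intro u
        rw [hf, hs]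
        by_cases hu : lab u = i
        · exact ⟨0, fun q => by simp [F, hu, bbDbl_apply]⟩
        · by_cases huv : u = v
          · exact ⟨1, fun q => by simp [F, huv, hv, Ne.symm hv, bbAdd_apply, add_comm]⟩
          · exact ⟨0, fun q => by simp [F, hu, huv, Ne.symm hu]⟩
      · rw [hf]; simp [F, ha]
      · rw [hf]; simp [F, hv]
  · intro H
    refine bb_fg Φ (raagGen Γ) fun g hg => ?_
    exact bbReach_all Φ Γ (raagGen Γ) lab hs (raagGen_comm Γ) (raagGen_closure Γ) H _ g
      (fun j _ => (bbCd_ker Φ g).1 hg j)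
end
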